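/- Let p > 0, n ∈ ℕ, and let β be a real number with -n < β < pn and β/p not a non-negative integer. Let γ_p(t) = ∫_ℝ e^{-|z|^p} e^{-itz} dz. Then for every ξ = (ξ₁,…,ξ_n) ∈ ℝⁿ with all coordinates nonzero, the Fourier transform of the function x ↦ (|x₁|^p + ⋯ + |x_n|^p)^{β/p} in the sense of tempered distributions coincides near ξ with the function ((|x₁|^p + ⋯ + |x_n|^p)^{β/p})^∧(ξ) = (p / Γ(-β/p)) ∫₀^∞ t^{n+β-1} ∏_{k=1}^n γ_p(t ξ_k) dt, and the integral on the right converges. -/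

import Mathlib

open MeasureTheory Metric
open scoped Real RealInnerProductSpace

noncomputable section

/-- The (non-unitary) Fourier transform `φ̂(ξ) = ∫_{ℝⁿ} φ(x) e^{-i(x,ξ)} dx`. -/
def ftNU {n : ℕ} (φ : EuclideanSpace ℝ (Fin n) → ℂ) (ξ : EuclideanSpace ℝ (Fin n)) : ℂ :=
  ∫ x, Complex.exp (-Complex.I * (⟪x, ξ⟫ : ℂ)) * φ x

/-- `γ_p`, the Fourier transform of `z ↦ exp(-|z|^p)` on `ℝ` (a real even function). -/
def gammaP (p t : ℝ) : ℝ :=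
  ∫ z : ℝ, Real.exp (-|z| ^ p) * Real.cos (t * z)

section Helpers

open Set Filter Topology

lemma aux_g_bound (p : ℝ) (b : ℝ) (k : ℕ) (z : ℝ) (hz : 0 < z) :
    z ^ (b + p * k) * Real.exp (-z ^ p) ≤ k.factorial * z ^ b := by
  have h1 : (z ^ p) ^ k / k.factorial ≤ Real.exp (z ^ p) :=
    Real.pow_div_factorial_le_exp (z ^ p) (by positivity) k
  have h2 : z ^ (b + p * k) = z ^ b * (z ^ p) ^ k := by
    rw [Real.rpow_add hz, Real.rpow_mul hz.le, Real.rpow_natCast]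
  rw [h2, Real.exp_neg]
  have h3 : (0 : ℝ) < k.factorial := by positivity
  rw [div_le_iff₀ h3] at h1
  rw [← div_eq_mul_inv, div_le_iff₀ (Real.exp_pos _)]
  have : 0 < z ^ b := by positivity
  nlinarith

lemma aux_g_int (p : ℝ) (hp : 0 < p) (c a : ℝ) (ha : 0 < a) :
    IntegrableOn (fun z : ℝ => z ^ c * Real.exp (-z ^ p)) (Ioi a) := by
  obtain ⟨k, hk⟩ := exists_nat_gt ((c + 2) / p)
  rw [div_lt_iff₀ hp] at hk
  have hb : c - p * k < -1 := by nlinarith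
  refine ((integrableOn_Ioi_rpow_of_lt hb ha).const_mul (k.factorial : ℝ)).mono' ?_ ?_
  · refine ContinuousOn.aestronglyMeasurable ?_ measurableSet_Ioi
    intro z hz
    have hz : 0 < z := ha.trans hz
    have h1 : ContinuousAt (fun z : ℝ => z ^ c) z := Real.continuousAt_rpow_const _ _ (Or.inl hz.ne')
    have h2 : ContinuousAt (fun z : ℝ => z ^ p) z := Real.continuousAt_rpow_const _ _ (Or.inl hz.ne')
    exact (h1.mul (Real.continuous_exp.continuousAt.comp h2.neg)).continuousWithinAt
  · filter_upwards [ae_restrict_mem measurableSet_Ioi] with z hz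
    have hz : 0 < z := ha.trans hz
    rw [Real.norm_of_nonneg (by positivity)]
    have := aux_g_bound p (c - p * k) k z hz
    simpa using this

lemma aux_g_deriv (p c z : ℝ) (hz : 0 < z) :
    HasDerivAt (fun z : ℝ => z ^ c * Real.exp (-z ^ p))
      (c * (z ^ (c - 1) * Real.exp (-z ^ p)) - p * (z ^ (c + p - 1) * Real.exp (-z ^ p))) z := by
  have h1 : HasDerivAt (fun z : ℝ => z ^ c) (c * z ^ (c - 1)) z :=
    Real.hasDerivAt_rpow_const (Or.inl hz.ne')
  have h2 : HasDerivAt (fun z : ℝ => z ^ p) (p * z ^ (p - 1)) z :=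
    Real.hasDerivAt_rpow_const (Or.inl hz.ne')
  refine (h1.mul h2.fun_neg.exp).congr_deriv ?_
  have : z ^ (c + p - 1) = z ^ c * z ^ (p - 1) := by
    rw [← Real.rpow_add hz]; ring_nf
  rw [this]; ring

lemma aux_g_tendsto (p : ℝ) (hp : 0 < p) (c : ℝ) :
    Tendsto (fun z : ℝ => z ^ c * Real.exp (-z ^ p)) atTop (𝓝 0) := by
  obtain ⟨k, hk⟩ := exists_nat_gt ((c + 2) / p)
  rw [div_lt_iff₀ hp] at hk
  have h1 : Tendsto (fun z : ℝ => (k.factorial : ℝ) * z ^ (-(p * k - c))) atTop (𝓝 (k.factorial * 0)) :=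
    (tendsto_rpow_neg_atTop (by nlinarith)).const_mul _
  rw [mul_zero] at h1
  refine squeeze_zero' ?_ ?_ h1
  · filter_upwards [eventually_gt_atTop 0] with z hz
    positivity
  · filter_upwards [eventually_gt_atTop 0] with z hz
    have := aux_g_bound p (c - p * k) k z hz
    simpa using this

lemma aux_osc_int (p : ℝ) (hp : 0 < p) (c a t : ℝ) (ha : 0 < a) :
    IntegrableOn (fun z : ℝ => ((z ^ c * Real.exp (-z ^ p) : ℝ) : ℂ) * Complex.exp (Complex.I * t * z))
      (Ioi a) := by
  refine ((aux_g_int p hp c a ha).ofReal (𝕜 := ℂ)).mul_bdd (c := 1) ?_ ?_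
  · exact (by fun_prop : Continuous fun z : ℝ => Complex.exp (Complex.I * t * z)).aestronglyMeasurable
  · refine Eventually.of_forall fun z => ?_
    rw [Complex.norm_exp]; simp

lemma aux_osc (p : ℝ) (hp : 0 < p) (N : ℕ) : ∀ b : ℝ, b < N - 1 → ∀ k : ℕ, ∃ C : ℝ, 0 ≤ C ∧
    ∀ t : ℝ, 0 < t → ‖∫ z in Ioi (1 / t), ((z ^ (b + p * k) * Real.exp (-z ^ p) : ℝ) : ℂ) *
      Complex.exp (Complex.I * t * z)‖ ≤ C * t ^ (-b - 1) := by
  induction N with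
  | zero =>
    intro b hb k
    have hb : b < -1 := by simpa using hb
    refine ⟨k.factorial / (-(b + 1)), div_nonneg (by positivity) (by linarith), fun t ht => ?_⟩
    have hi : (0 : ℝ) < 1 / t := by positivity
    refine (norm_integral_le_of_norm_le
      ((integrableOn_Ioi_rpow_of_lt hb hi).const_mul (k.factorial : ℝ)) ?_).trans ?_
    · filter_upwards [ae_restrict_mem measurableSet_Ioi] with z hz
      have hz : 0 < z := hi.trans hz
      rw [norm_mul, Complex.norm_exp, Complex.norm_real, Real.norm_of_nonneg (by positivity)]
      simpa using aux_g_bound p b k z hz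
    · rw [integral_const_mul, integral_Ioi_rpow_of_lt hb hi]
      rw [one_div, Real.inv_rpow ht.le, ← Real.rpow_neg ht.le]
      apply le_of_eq
      have : b + 1 ≠ 0 := by linarith
      rw [show -b - 1 = -(b + 1) by ring]
      field_simp
  | succ N ih =>
    intro b hb k
    push_cast at hb
    obtain ⟨C1, hC1, h1⟩ := ih (b - 1) (by linarith) k
    obtain ⟨C2, hC2, h2⟩ := ih (b - 1) (by linarith) (k + 1)
    refine ⟨k.factorial + |b + p * k| * C1 + p * C2, by positivity, fun t ht => ?_⟩
    have hi : (0 : ℝ) < 1 / t := by positivity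
    have key : ∫ z in Ioi (1 / t),
        ((b + p * k : ℝ) * (((z ^ (b - 1 + p * k) * Real.exp (-z ^ p) : ℝ) : ℂ) *
          Complex.exp (Complex.I * t * z))
        - (p : ℂ) * (((z ^ (b - 1 + p * (k + 1 : ℕ)) * Real.exp (-z ^ p) : ℝ) : ℂ) *
          Complex.exp (Complex.I * t * z))
        + (Complex.I * t) * (((z ^ (b + p * k) * Real.exp (-z ^ p) : ℝ) : ℂ) *
          Complex.exp (Complex.I * t * z)))
        = 0 - ((((1 / t) ^ (b + p * k) * Real.exp (-(1 / t) ^ p) : ℝ) : ℂ) *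
          Complex.exp (Complex.I * t * (1 / t : ℝ))) := by
      refine integral_Ioi_of_hasDerivAt_of_tendsto'
        (f := fun z : ℝ => ((z ^ (b + p * k) * Real.exp (-z ^ p) : ℝ) : ℂ) *
          Complex.exp (Complex.I * t * z)) ?_ ?_ ?_
      · intro z hz
        have hz : 0 < z := hi.trans_le hz
        have e1 := (aux_g_deriv p (b + p * k) z hz).ofReal_comp
        have e2 : HasDerivAt (fun z : ℝ => Complex.exp (Complex.I * t * z))
            (Complex.exp (Complex.I * t * z) * (Complex.I * t)) z := by
          have : HasDerivAt (fun z : ℝ => Complex.I * t * (z : ℂ)) (Complex.I * t) z := by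
            simpa using (Complex.ofRealCLM.hasDerivAt (x := z)).const_mul (Complex.I * t)
          exact this.cexp
        refine (e1.mul e2).congr_deriv ?_
        rw [show b - 1 + p * k = b + p * k - 1 by ring,
          show b - 1 + p * (k + 1 : ℕ) = b + p * k + p - 1 by push_cast; ring]
        push_cast
        ring
      · exact (((aux_osc_int p hp _ _ t hi).const_mul _).sub
          ((aux_osc_int p hp _ _ t hi).const_mul _)).add ((aux_osc_int p hp _ _ t hi).const_mul _)
      · rw [tendsto_zero_iff_norm_tendsto_zero]
        have := (aux_g_tendsto p hp (b + p * k)).norm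
        rw [norm_zero] at this
        refine this.congr fun z => ?_
        rw [norm_mul (Complex.ofReal _), Complex.norm_exp, Complex.norm_real]
        simp
    have i1 := (aux_osc_int p hp (b - 1 + p * k) _ t hi).const_mul ((b + p * k : ℝ) : ℂ)
    have i2 := (aux_osc_int p hp (b - 1 + p * (k + 1 : ℕ)) _ t hi).const_mul (p : ℂ)
    have i3 := (aux_osc_int p hp (b + p * k) _ t hi).const_mul (Complex.I * t)
    have i12 := Integrable.sub i1 i2
    simp only [Pi.sub_def] at i12
    rw [integral_add i12 i3, integral_sub i1 i2,
      integral_const_mul, integral_const_mul, integral_const_mul] at key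
    specialize h1 t ht
    specialize h2 t ht
    set A := ∫ z in Ioi (1 / t), ((z ^ (b - 1 + p * k) * Real.exp (-z ^ p) : ℝ) : ℂ) *
          Complex.exp (Complex.I * t * z)
    set B := ∫ z in Ioi (1 / t), ((z ^ (b - 1 + p * (k + 1 : ℕ)) * Real.exp (-z ^ p) : ℝ) : ℂ) *
          Complex.exp (Complex.I * t * z)
    set D := ∫ z in Ioi (1 / t), ((z ^ (b + p * k) * Real.exp (-z ^ p) : ℝ) : ℂ) *
          Complex.exp (Complex.I * t * z)
    have h3 : ‖((((1 / t) ^ (b + p * k) * Real.exp (-(1 / t) ^ p) : ℝ) : ℂ) *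
          Complex.exp (Complex.I * t * (1 / t : ℝ)))‖ ≤ k.factorial * t ^ (-b) := by
      rw [norm_mul, Complex.norm_exp, Complex.norm_real, Real.norm_of_nonneg (by positivity)]
      have := aux_g_bound p b k (1 / t) hi
      have h4 : (1 / t) ^ b = t ^ (-b) := by
        rw [one_div, Real.inv_rpow ht.le, ← Real.rpow_neg ht.le]
      rw [← h4]
      have h5 : (Complex.I * t * (1 / t : ℝ)).re = 0 := by simp
      rw [h5]
      simpa using this
    set Q := ((((1 / t) ^ (b + p * k) * Real.exp (-(1 / t) ^ p) : ℝ) : ℂ) *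
          Complex.exp (Complex.I * t * (1 / t : ℝ)))
    have h6 : Complex.I * t * D = -Q - (b + p * k : ℝ) * A + p * B := by
      linear_combination key
    have h7 : t * ‖D‖ ≤ k.factorial * t ^ (-b) + |b + p * k| * (C1 * t ^ (-b))
        + p * (C2 * t ^ (-b)) := by
      have : ‖Complex.I * t * D‖ = t * ‖D‖ := by
        rw [norm_mul, norm_mul, Complex.norm_I, Complex.norm_real, Real.norm_of_nonneg ht.le, one_mul]
      rw [← this, h6]
      rw [show -(b - 1) - 1 = -b by ring] at h1 h2
      refine (norm_add_le _ _).trans (add_le_add ((norm_sub_le _ _).trans (add_le_add ?_ ?_)) ?_)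
      · rwa [norm_neg]
      · rw [norm_mul, Complex.norm_real, Real.norm_eq_abs]; gcongr
      · rw [norm_mul, Complex.norm_real, Real.norm_of_nonneg hp.le]; gcongr
    have h8 : t ^ (-b - 1) = t ^ (-b) / t := by rw [Real.rpow_sub_one ht.ne']
    rw [h8, ← mul_div_assoc, le_div_iff₀ ht]
    linarith

lemma aux_exp_int (p : ℝ) (hp : 0 < p) : Integrable (fun z : ℝ => Real.exp (-|z| ^ p)) := by
  have h := integrableOn_rpow_mul_exp_neg_rpow (s := 0) (by norm_num) hp
  simp only [Real.rpow_zero, one_mul] at h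
  have h1 : IntegrableOn (fun z : ℝ => Real.exp (-|z| ^ p)) (Ioi 0) :=
    h.congr_fun (fun z hz => by simp only [abs_of_pos (mem_Ioi.1 hz)]) measurableSet_Ioi
  have h2 : IntegrableOn (fun z : ℝ => Real.exp (-|z| ^ p)) (Iic 0) := by
    rw [integrableOn_Iic_iff_integrableOn_Iio]
    have := h1.comp_neg
    simpa using this
  rw [← integrableOn_univ, ← Iic_union_Ioi (a := (0 : ℝ))]
  exact h2.union h1

lemma gammaP_half (p : ℝ) (t : ℝ) :
    gammaP p t = 2 * ∫ z in Ioi (0 : ℝ), Real.exp (-z ^ p) * Real.cos (t * z) := by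
  unfold gammaP
  rw [← integral_comp_abs (f := fun z => Real.exp (-z ^ p) * Real.cos (t * z))]
  congr 1; ext z
  rcases abs_choice z with h | h <;> rw [h] 
  rw [mul_neg, Real.cos_neg]

lemma gammaP_abs (p t : ℝ) : gammaP p |t| = gammaP p t := by
  unfold gammaP
  congr 1; ext z
  rcases abs_choice t with h | h <;> rw [h] 
  rw [neg_mul, Real.cos_neg]

lemma gammaP_decay (p : ℝ) (hp : 0 < p) : ∃ C : ℝ, 0 ≤ C ∧
    (∀ t, |gammaP p t| ≤ C) ∧ (∀ t, t ≠ 0 → |gammaP p t| ≤ C * |t| ^ (-(1 + p))) := by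
  suffices h : ∃ C : ℝ, 0 ≤ C ∧ ∀ t, 0 < t → |gammaP p t| ≤ C * t ^ (-(1 + p)) by
    obtain ⟨C, hC, h⟩ := h
    set D := ∫ z : ℝ, Real.exp (-|z| ^ p)
    have hD : 0 ≤ D := integral_nonneg fun z => (Real.exp_pos _).le
    have hb : ∀ t, |gammaP p t| ≤ D := fun t => by
      rw [← Real.norm_eq_abs]
      refine norm_integral_le_of_norm_le (aux_exp_int p hp) (Eventually.of_forall fun z => ?_)
      rw [norm_mul, Real.norm_of_nonneg (Real.exp_pos _).le]
      exact mul_le_of_le_one_right (Real.exp_pos _).le (Real.abs_cos_le_one _)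
    refine ⟨C + D, by positivity, fun t => (hb t).trans (by linarith), fun t ht => ?_⟩
    · have h1 := h |t| (abs_pos.2 ht)
      rw [gammaP_abs] at h1
      refine h1.trans ?_
      gcongr
      linarith
  obtain ⟨N, hN⟩ := exists_nat_gt (p + 1)
  obtain ⟨C, hC, h⟩ := aux_osc p hp N (p - 1) (by linarith) 0
  refine ⟨2 * (1 + p * C), by positivity, fun t ht => ?_⟩
  have hi : (0 : ℝ) < 1 / t := by positivity
  have g1 := integrableOn_rpow_mul_exp_neg_rpow (s := p - 1) (by linarith) hp
  have g1' : IntegrableOn (fun z : ℝ => z ^ (p - 1) * Real.exp (-z ^ p) * Real.sin (t * z)) (Ioi 0) := by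
    refine g1.mul_bdd (c := 1) ?_ ?_
    · exact (by fun_prop : Continuous fun z : ℝ => Real.sin (t * z)).aestronglyMeasurable
    · exact Eventually.of_forall fun z => Real.abs_sin_le_one _
  have g0 := integrableOn_rpow_mul_exp_neg_rpow (s := 0) (by norm_num) hp
  simp only [Real.rpow_zero, one_mul] at g0
  have g0' : IntegrableOn (fun z : ℝ => Real.exp (-z ^ p) * Real.cos (t * z)) (Ioi 0) := by
    refine g0.mul_bdd (c := 1) ?_ ?_
    · exact (by fun_prop : Continuous fun z : ℝ => Real.cos (t * z)).aestronglyMeasurable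
    · exact Eventually.of_forall fun z => Real.abs_cos_le_one _
  have key : ∫ z in Ioi (0 : ℝ), (t * (Real.exp (-z ^ p) * Real.cos (t * z))
      - p * (z ^ (p - 1) * Real.exp (-z ^ p) * Real.sin (t * z))) = 0 -
      Real.exp (-(0 : ℝ) ^ p) * Real.sin (t * 0) := by
    refine integral_Ioi_of_hasDerivAt_of_tendsto
      (f := fun z : ℝ => Real.exp (-z ^ p) * Real.sin (t * z)) ?_ ?_ ?_ ?_
    · have : Continuous fun z : ℝ => z ^ p := Real.continuous_rpow_const hp.le
      exact Continuous.continuousWithinAt (by fun_prop)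
    · intro z hz
      have e1 := aux_g_deriv p 0 z hz
      have e2 : HasDerivAt (fun z : ℝ => Real.sin (t * z)) (Real.cos (t * z) * t) z := by
        have : HasDerivAt (fun z : ℝ => t * z) t z := by simpa using (hasDerivAt_id z).const_mul t
        exact this.sin
      simp only [Real.rpow_zero, one_mul] at e1
      refine (e1.mul e2).congr_deriv ?_
      rw [zero_add]; ring
    · exact (g0'.const_mul t).sub (g1'.const_mul p)
    · rw [tendsto_zero_iff_norm_tendsto_zero]
      have := aux_g_tendsto p hp 0
      refine squeeze_zero (fun _ => norm_nonneg _) (fun z => ?_) this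
      rw [norm_mul, Real.norm_of_nonneg (Real.exp_pos _).le, Real.rpow_zero, one_mul]
      exact mul_le_of_le_one_right (Real.exp_pos _).le (Real.abs_sin_le_one _)
  rw [integral_sub (g0'.const_mul t) (g1'.const_mul p), integral_const_mul, integral_const_mul] at key
  simp only [mul_zero, Real.sin_zero, sub_zero] at key
  have hsplit : ∫ z in Ioi (0 : ℝ), z ^ (p - 1) * Real.exp (-z ^ p) * Real.sin (t * z)
      = (∫ z in Ioc 0 (1 / t), z ^ (p - 1) * Real.exp (-z ^ p) * Real.sin (t * z))
      + ∫ z in Ioi (1 / t), z ^ (p - 1) * Real.exp (-z ^ p) * Real.sin (t * z) := by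
    rw [← Ioc_union_Ioi_eq_Ioi hi.le, setIntegral_union (Ioc_disjoint_Ioi le_rfl) measurableSet_Ioi
      (g1'.mono_set Ioc_subset_Ioi_self) (g1'.mono_set (Ioi_subset_Ioi hi.le))]
  have hA : |∫ z in Ioc 0 (1 / t), z ^ (p - 1) * Real.exp (-z ^ p) * Real.sin (t * z)| ≤ t ^ (-p) / p := by
    have hInteg : IntervalIntegrable (fun z : ℝ => z ^ (p - 1)) volume 0 (1 / t) :=
      intervalIntegral.intervalIntegrable_rpow' (by linarith)
    rw [intervalIntegrable_iff_integrableOn_Ioc_of_le hi.le] at hInteg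
    rw [← Real.norm_eq_abs]
    refine (norm_integral_le_of_norm_le hInteg ?_).trans ?_
    · filter_upwards [ae_restrict_mem measurableSet_Ioc] with z hz
      have hz0 : 0 < z := hz.1
      have e1 : Real.exp (-z ^ p) ≤ 1 := Real.exp_le_one_iff.2 (by have : 0 < z ^ p := by positivity
                                                                   linarith)
      rw [norm_mul, norm_mul, Real.norm_of_nonneg (by positivity : 0 ≤ z ^ (p - 1)),
        Real.norm_of_nonneg (Real.exp_pos _).le]
      have e2 := Real.abs_sin_le_one (t * z)
      have e3 : 0 ≤ z ^ (p - 1) := by positivity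
      calc z ^ (p - 1) * Real.exp (-z ^ p) * ‖Real.sin (t * z)‖ ≤ z ^ (p - 1) * 1 * 1 := by
            gcongr; exact e2
        _ = _ := by ring
    · rw [← intervalIntegral.integral_of_le hi.le, integral_rpow (Or.inl (by linarith))]
      rw [sub_add_cancel, Real.zero_rpow hp.ne', sub_zero, one_div, Real.inv_rpow ht.le, ← Real.rpow_neg ht.le]
  have hB : |∫ z in Ioi (1 / t), z ^ (p - 1) * Real.exp (-z ^ p) * Real.sin (t * z)| ≤ C * t ^ (-p) := by
    have h := h t ht
    rw [show -(p - 1) - 1 = -p by ring] at h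
    refine le_trans ?_ h
    have e := integral_im (𝕜 := ℂ) (aux_osc_int p hp (p - 1 + p * (0 : ℕ)) (1 / t) t hi)
    have e' : ∫ z in Ioi (1 / t), z ^ (p - 1) * Real.exp (-z ^ p) * Real.sin (t * z)
       = (∫ z in Ioi (1 / t), ((z ^ (p - 1 + p * (0 : ℕ)) * Real.exp (-z ^ p) : ℝ) : ℂ) *
      Complex.exp (Complex.I * t * z)).im := by
      refine Eq.trans ?_ e
      congr 1; ext z
      simp [Complex.exp_im, -Complex.ofReal_mul, -Complex.ofReal_exp]
    rw [e']
    exact Complex.abs_im_le_norm _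
  have hfin : |t * ∫ z in Ioi (0 : ℝ), Real.exp (-z ^ p) * Real.cos (t * z)| ≤ (1 + p * C) * t ^ (-p) := by
    rw [sub_eq_zero] at key
    rw [key, abs_mul, abs_of_pos hp, hsplit]
    calc _ ≤ p * (t ^ (-p) / p + C * t ^ (-p)) := by
          gcongr; exact (abs_add_le _ _).trans (add_le_add hA hB)
      _ = _ := by field_simp
  rw [gammaP_half, abs_mul, abs_two, mul_assoc]
  gcongr
  rw [abs_mul, abs_of_pos ht] at hfin
  rw [show -(1 + p) = -p - 1 by ring, Real.rpow_sub_one ht.ne', ← mul_div_assoc, le_div_iff₀ ht]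
  linarith

open scoped LineDeriv FourierTransform

lemma flat_bound {n : ℕ} (k : Fin n) (N : ℕ) : ∀ φ : SchwartzMap (EuclideanSpace ℝ (Fin n)) ℂ,
    tsupport ⇑φ ⊆ {x : EuclideanSpace ℝ (Fin n) | ∀ k, x k ≠ 0} →
    ∃ C : ℝ, 0 ≤ C ∧ ∀ x, ‖φ x‖ ≤ C * |x k| ^ N := by
  induction N with
  | zero =>
    intro φ _
    obtain ⟨C, hC⟩ := φ.decay 0 0
    refine ⟨C, hC.1.le, fun x => ?_⟩
    simpa using hC.2 x
  | succ N ih =>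
    intro φ hφ
    set e : EuclideanSpace ℝ (Fin n) := EuclideanSpace.single k 1
    obtain ⟨C, hC, h⟩ := ih (∂_{e} φ) ((SchwartzMap.tsupport_lineDerivOp_subset e φ).trans hφ)
    refine ⟨C, hC, fun x => ?_⟩
    set x0 := x - x k • e with hx0
    have hek : e k = 1 := by simp [e]
    have hx0k : x0 k = 0 := by simp [hx0, hek]
    have hz : φ x0 = 0 := by
      by_contra hne
      exact hφ (subset_tsupport _ hne) k hx0k
    have hd : ∀ s : ℝ, HasDerivAt (fun s : ℝ => φ (x0 + s • e)) (∂_{e} φ (x0 + s • e)) s := by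
      intro s
      have h1 : HasDerivAt (fun s : ℝ => x0 + s • e) e s := by
        simpa using ((hasDerivAt_id s).smul_const e).const_add x0
      rw [SchwartzMap.lineDerivOp_apply_eq_fderiv]
      exact (φ.differentiableAt (x := x0 + s • e)).hasFDerivAt.comp_hasDerivAt s h1
    have := Convex.norm_image_sub_le_of_norm_hasDerivWithin_le (s := uIcc 0 (x k))
      (f := fun s : ℝ => φ (x0 + s • e)) (f' := fun s => ∂_{e} φ (x0 + s • e)) (C := C * |x k| ^ N)
      (fun s _ => (hd s).hasDerivWithinAt) (fun s hs => ?_) (convex_uIcc _ _)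
      left_mem_uIcc right_mem_uIcc
    · simp only [zero_smul, add_zero, hz, sub_zero] at this
      rw [show x0 + x k • e = x by simp [hx0]] at this
      rw [pow_succ, ← mul_assoc]
      exact this
    · refine (h _).trans ?_
      have : (x0 + s • e) k = s := by
        rw [PiLp.add_apply, PiLp.smul_apply, hx0k, hek]; simp
      rw [this]
      have : |s| ≤ |x k| := by
        have := abs_sub_left_of_mem_uIcc hs
        simpa using this
      gcongr

lemma flat_bound_real {n : ℕ} (k : Fin n) (φ : SchwartzMap (EuclideanSpace ℝ (Fin n)) ℂ)
    (hφ : tsupport ⇑φ ⊆ {x : EuclideanSpace ℝ (Fin n) | ∀ k, x k ≠ 0}) (c : ℝ) (hc : 0 ≤ c) :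
    ∃ C : ℝ, 0 ≤ C ∧ ∀ x, ‖φ x‖ ≤ C * |x k| ^ c := by
  obtain ⟨C, hC, h⟩ := flat_bound k ⌈c⌉₊ φ hφ
  obtain ⟨D, hD, h'⟩ := flat_bound k 0 φ hφ
  refine ⟨C + D, by positivity, fun x => ?_⟩
  rcases le_total |x k| 1 with h1 | h1
  · rcases eq_or_ne (x k) 0 with h0 | h0
    · have hz : φ x = 0 := by
        by_contra hne
        exact hφ (subset_tsupport _ hne) k h0
      rw [hz, norm_zero]; positivity
    refine (h x).trans ?_
    have : |x k| ^ ⌈c⌉₊ ≤ |x k| ^ c := by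
      rw [← Real.rpow_natCast]
      exact Real.rpow_le_rpow_of_exponent_ge (abs_pos.2 h0) h1 (Nat.le_ceil c)
    gcongr
    linarith
  · have h2 : 1 ≤ |x k| ^ c := Real.one_le_rpow h1 hc
    have h3 := h' x
    rw [pow_zero, mul_one] at h3
    nlinarith

lemma schwartz_decay {n : ℕ} (φ : SchwartzMap (EuclideanSpace ℝ (Fin n)) ℂ) (M : ℕ) :
    ∃ C : ℝ, 0 ≤ C ∧ ∀ x, ‖φ x‖ ≤ C * ((1 + ‖x‖) ^ M)⁻¹ := by
  refine ⟨2 ^ M * (Finset.Iic (M, 0)).sup (fun m => SchwartzMap.seminorm ℝ m.1 m.2) φ,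
    by positivity, fun x => ?_⟩
  · have := SchwartzMap.one_add_le_sup_seminorm_apply (𝕜 := ℝ) (m := (M, 0)) le_rfl le_rfl φ x
    rw [norm_iteratedFDeriv_zero] at this
    rw [← div_eq_mul_inv, le_div_iff₀ (by positivity), mul_comm]
    exact this

lemma integrable_japanese (n M : ℕ) (hM : n < M) :
    Integrable (fun x : EuclideanSpace ℝ (Fin n) => ((1 + ‖x‖) ^ M)⁻¹) := by
  have := integrable_one_add_norm (E := EuclideanSpace ℝ (Fin n)) (μ := volume) (r := M)
    (by simpa using hM)
  refine this.congr (Eventually.of_forall fun x => ?_)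
  simp only
  rw [Real.rpow_neg (by positivity), Real.rpow_natCast]

lemma flat_integrable {n : ℕ} (φ : SchwartzMap (EuclideanSpace ℝ (Fin n)) ℂ)
    (hφ : tsupport ⇑φ ⊆ {x : EuclideanSpace ℝ (Fin n) | ∀ k, x k ≠ 0}) (a : ℝ) (ha : 0 ≤ a) :
    Integrable (fun x => ‖φ x‖ * ∏ k, |x k| ^ (-a)) := by
  choose C hC h using fun k => flat_bound_real k φ hφ (a * (n + 1)) (by positivity)
  obtain ⟨D, hD, h'⟩ := schwartz_decay φ ((n + 1) * (n + 1))
  set K := max 1 (D * ∏ k, C k)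
  refine ((integrable_japanese n (n + 1) (Nat.lt_succ_self n)).const_mul K).mono' ?_ ?_
  · refine (φ.continuous.norm.measurable.mul ?_).aestronglyMeasurable
    fun_prop
  · refine Eventually.of_forall fun x => ?_
    rw [Real.norm_of_nonneg (by positivity)]
    by_cases hx : ∀ k, x k ≠ 0
    swap
    · have hz : φ x = 0 := by
        by_contra hne
        exact hx (hφ (subset_tsupport _ hne))
      rw [hz, norm_zero, zero_mul]; positivity
    have hpos : ∀ k, 0 < |x k| := fun k => abs_pos.2 (hx k)
    have e1 : ‖φ x‖ ≤ K * ((1 + ‖x‖) ^ (n + 1))⁻¹ * ∏ k, |x k| ^ a := by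
      have hpp : 0 ≤ ∏ k, |x k| ^ a := by positivity
      rw [← pow_le_pow_iff_left₀ (norm_nonneg _) (by positivity) (Nat.succ_ne_zero n)]
      calc ‖φ x‖ ^ (n + 1) = ‖φ x‖ * ∏ k : Fin n, ‖φ x‖ := by simp [pow_succ, mul_comm]
        _ ≤ (D * ((1 + ‖x‖) ^ ((n + 1) * (n + 1)))⁻¹) * ∏ k, (C k * |x k| ^ (a * (n + 1))) := by
            gcongr with k
            · exact h' x
            · exact h k x
        _ = (D * ∏ k, C k) * (((1 + ‖x‖) ^ (n + 1))⁻¹ * ∏ k, |x k| ^ a) ^ (n + 1) := by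
            rw [Finset.prod_mul_distrib, mul_pow, ← Finset.prod_pow, inv_pow, ← pow_mul]
            have : ∀ k, |x k| ^ (a * (n + 1)) = (|x k| ^ a) ^ (n + 1) := fun k => by
              rw [Real.rpow_mul (hpos k).le, ← Real.rpow_natCast]; push_cast; rfl
            simp only [this]
            ring
        _ ≤ K ^ (n + 1) * (((1 + ‖x‖) ^ (n + 1))⁻¹ * ∏ k, |x k| ^ a) ^ (n + 1) := by
            gcongr
            exact (le_max_right _ _).trans (le_self_pow₀ (le_max_left _ _) (Nat.succ_ne_zero n))
        _ = _ := by rw [← mul_pow, mul_assoc]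
    have e2 : ∏ k, |x k| ^ (-a) = (∏ k, |x k| ^ a)⁻¹ := by
      rw [← Finset.prod_inv_distrib]
      exact Finset.prod_congr rfl fun k _ => Real.rpow_neg (hpos k).le _
    rw [e2, ← div_eq_mul_inv, div_le_iff₀ (Finset.prod_pos fun k _ => Real.rpow_pos_of_pos (hpos k) _)]
    exact e1

lemma ftNU_eq {n : ℕ} (φ : SchwartzMap (EuclideanSpace ℝ (Fin n)) ℂ) (x : EuclideanSpace ℝ (Fin n)) :
    ftNU ⇑φ x = (𝓕 φ) ((2 * π)⁻¹ • x) := by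
  rw [SchwartzMap.fourier_coe, Real.fourier_eq']
  unfold ftNU
  congr 1; ext v
  rw [smul_eq_mul, inner_smul_right]
  congr 2
  push_cast
  field_simp

lemma ftNU_cont {n : ℕ} (φ : SchwartzMap (EuclideanSpace ℝ (Fin n)) ℂ) : Continuous (ftNU ⇑φ) := by
  have : ftNU ⇑φ = fun x => (𝓕 φ) ((2 * π)⁻¹ • x) := funext (ftNU_eq φ)
  rw [this]
  exact (𝓕 φ).continuous.comp (by fun_prop)

lemma ftNU_decay {n : ℕ} (φ : SchwartzMap (EuclideanSpace ℝ (Fin n)) ℂ) (M : ℕ) :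
    ∃ C : ℝ, 0 ≤ C ∧ ∀ x, ‖ftNU ⇑φ x‖ ≤ C * ((1 + ‖x‖) ^ M)⁻¹ := by
  obtain ⟨C, hC, h⟩ := schwartz_decay (𝓕 φ) M
  refine ⟨C * (2 * π) ^ M, by positivity, fun x => ?_⟩
  rw [ftNU_eq]
  refine (h _).trans ?_
  rw [mul_assoc]
  gcongr
  rw [← div_eq_mul_inv, le_div_iff₀ (by positivity), ← div_eq_inv_mul, div_le_iff₀ (by positivity),
    ← mul_pow]
  gcongr
  rw [norm_smul, Real.norm_of_nonneg (by positivity)]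
  have : (1 : ℝ) ≤ 2 * π := by have := Real.pi_gt_three; linarith
  have e : (2 * π) * (1 + (2 * π)⁻¹ * ‖x‖) = 2 * π + ‖x‖ := by field_simp
  rw [e]; linarith

def Sp {n : ℕ} (p : ℝ) (x : EuclideanSpace ℝ (Fin n)) : ℝ := ∑ k, |x k| ^ p

lemma Sp_nonneg {n : ℕ} (p : ℝ) (x : EuclideanSpace ℝ (Fin n)) : 0 ≤ Sp p x :=
  Finset.sum_nonneg fun _ _ => by positivity

lemma Sp_cont {n : ℕ} (p : ℝ) (hp : 0 < p) :
    Continuous (fun x : EuclideanSpace ℝ (Fin n) => Sp p x) := by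
  have : Continuous fun z : ℝ => z ^ p := Real.continuous_rpow_const hp.le
  unfold Sp
  refine continuous_finsetSum _ fun k _ => this.comp (by fun_prop)

lemma ae_coord_ne {n : ℕ} : ∀ᵐ x : EuclideanSpace ℝ (Fin n), ∀ k, x k ≠ 0 := by
  rw [ae_all_iff]
  intro k
  have h : ∀ᵐ y : Fin n → ℝ, y k ≠ 0 := Measure.ae_eval_ne (μ := fun _ => volume) k 0
  exact (PiLp.volume_preserving_ofLp (Fin n)).quasiMeasurePreserving.ae h

lemma integrable_even (f : ℝ → ℝ) (h : IntegrableOn f (Ioi 0)) : Integrable (fun z => f |z|) := by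
  have h1 : IntegrableOn (fun z : ℝ => f |z|) (Ioi 0) :=
    h.congr_fun (fun z hz => by simp only [abs_of_pos (mem_Ioi.1 hz)]) measurableSet_Ioi
  have h2 : IntegrableOn (fun z : ℝ => f |z|) (Iic 0) := by
    rw [integrableOn_Iic_iff_integrableOn_Iio]
    have := h1.comp_neg
    simpa using this
  rw [← integrableOn_univ, ← Iic_union_Ioi (a := (0 : ℝ))]
  exact h2.union h1

lemma integrable_1d (a : ℝ) (ha : -1 < a) (ha' : a ≤ 0) :
    Integrable (fun z : ℝ => |z| ^ a * ((1 + |z|) ^ 2)⁻¹) := by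
  refine integrable_even (fun z => z ^ a * ((1 + z) ^ 2)⁻¹) ?_
  rw [← Ioc_union_Ioi_eq_Ioi zero_le_one]
  refine IntegrableOn.union ?_ ?_
  · have hInteg : IntervalIntegrable (fun z : ℝ => z ^ a) volume 0 1 :=
      intervalIntegral.intervalIntegrable_rpow' (by linarith)
    rw [intervalIntegrable_iff_integrableOn_Ioc_of_le zero_le_one] at hInteg
    refine hInteg.mono' (by fun_prop) ?_
    filter_upwards [ae_restrict_mem measurableSet_Ioc] with z hz
    have hz0 : 0 < z := hz.1
    rw [Real.norm_of_nonneg (by positivity)]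
    refine mul_le_of_le_one_right (by positivity) (inv_le_one_of_one_le₀ ?_)
    exact one_le_pow₀ (by linarith)
  · refine (integrableOn_Ioi_rpow_of_lt (a := -2) (by norm_num) one_pos).mono' (by fun_prop) ?_
    filter_upwards [ae_restrict_mem measurableSet_Ioi] with z hz
    have hz1 : 1 < z := hz
    have hz0 : 0 < z := by linarith
    rw [Real.norm_of_nonneg (by positivity)]
    have h1 : z ^ a ≤ 1 := Real.rpow_le_one_of_one_le_of_nonpos hz1.le ha'
    have h2 : ((1 + z) ^ 2)⁻¹ ≤ z ^ (-2 : ℝ) := by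
      rw [Real.rpow_neg hz0.le, Real.rpow_two]
      gcongr; linarith
    calc _ ≤ 1 * z ^ (-2 : ℝ) := by gcongr
      _ = _ := one_mul _

lemma integrable_prod_E {n : ℕ} {𝕜 : Type*} [RCLike 𝕜] (f : Fin n → ℝ → 𝕜) (hf : ∀ i, Integrable (f i)) :
    Integrable (fun x : EuclideanSpace ℝ (Fin n) => ∏ k, f k (x k)) := by
  have := Integrable.fintype_prod (μ := fun _ => volume) hf
  exact (PiLp.volume_preserving_ofLp (Fin n)).integrable_comp_of_integrable this

lemma integral_prod_E {n : ℕ} {𝕜 : Type*} [RCLike 𝕜] (f : Fin n → ℝ → 𝕜) :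
    ∫ x : EuclideanSpace ℝ (Fin n), ∏ k, f k (x k) = ∏ k, ∫ z, f k z := by
  have := integral_fintype_prod_volume_eq_prod f
  rw [← this]
  exact (PiLp.volume_preserving_ofLp (Fin n)).integral_comp
    (MeasurableEquiv.toLp 2 (Fin n → ℝ)).symm.measurableEmbedding (fun y => ∏ k, f k (y k))

lemma Sp_int_pos {n : ℕ} (p : ℝ) (hp : 0 < p) (s : ℝ) (hs : 0 ≤ s)
    (φ : SchwartzMap (EuclideanSpace ℝ (Fin n)) ℂ) :
    Integrable (fun x => Sp p x ^ s * ‖ftNU ⇑φ x‖) := by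
  set M := ⌈p * s⌉₊
  obtain ⟨C, hC, h⟩ := ftNU_decay φ (M + (n + 1))
  refine ((integrable_japanese n (n + 1) (Nat.lt_succ_self n)).const_mul ((n : ℝ) ^ s * C)).mono' ?_ ?_
  · exact ((Sp_cont p hp).measurable.pow_const s |>.mul (ftNU_cont φ).norm.measurable).aestronglyMeasurable
  · refine Eventually.of_forall fun x => ?_
    have hS := Sp_nonneg p x
    rw [Real.norm_of_nonneg (by positivity)]
    have h1 : Sp p x ≤ n * (1 + ‖x‖) ^ p := by
      unfold Sp
      calc _ ≤ ∑ k : Fin n, (1 + ‖x‖) ^ p := by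
            gcongr with k
            have := PiLp.norm_apply_le x k
            rw [Real.norm_eq_abs] at this
            linarith
        _ = _ := by simp
    have h2 : Sp p x ^ s ≤ (n : ℝ) ^ s * (1 + ‖x‖) ^ M := by
      calc _ ≤ (n * (1 + ‖x‖) ^ p) ^ s := by gcongr
        _ = (n : ℝ) ^ s * (1 + ‖x‖) ^ (p * s) := by
          rw [Real.mul_rpow (by positivity) (by positivity), ← Real.rpow_mul (by positivity)]
        _ ≤ _ := by
          gcongr
          rw [← Real.rpow_natCast]
          exact Real.rpow_le_rpow_of_exponent_le (by linarith [norm_nonneg x]) (Nat.le_ceil _)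
    calc _ ≤ ((n : ℝ) ^ s * (1 + ‖x‖) ^ M) * (C * ((1 + ‖x‖) ^ (M + (n + 1)))⁻¹) := by
          gcongr; exact h x
      _ = _ := by rw [pow_add (1 + ‖x‖) M]; field_simp

lemma Sp_int_neg {n : ℕ} (p : ℝ) (hp : 0 < p) (hn : 1 ≤ n) (β : ℝ) (hβ : β < 0) (hβn : -(n : ℝ) < β)
    (φ : SchwartzMap (EuclideanSpace ℝ (Fin n)) ℂ) :
    Integrable (fun x => Sp p x ^ (β / p) * ‖ftNU ⇑φ x‖) := by
  have hn0 : (0 : ℝ) < n := by exact_mod_cast hn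
  obtain ⟨C, hC, h⟩ := ftNU_decay φ (2 * n)
  have hInteg := integrable_prod_E (n := n) (fun _ z => |z| ^ (β / n) * ((1 + |z|) ^ 2)⁻¹)
    (fun _ => integrable_1d (β / n) (by rw [lt_div_iff₀ hn0]; linarith)
      (div_nonpos_of_nonpos_of_nonneg hβ.le hn0.le))
  refine (hInteg.const_mul C).mono' ?_ ?_
  · exact ((Sp_cont p hp).measurable.pow_const _ |>.mul (ftNU_cont φ).norm.measurable).aestronglyMeasurable
  · filter_upwards [ae_coord_ne] with x hx
    have hpos : ∀ k, 0 < |x k| := fun k => abs_pos.2 (hx k)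
    have hS := Sp_nonneg p x
    rw [Real.norm_of_nonneg (by positivity)]
    have h1 : ∏ k, |x k| ^ (p / n) ≤ Sp p x := by
      have := Real.geom_mean_le_arith_mean_weighted Finset.univ (fun _ : Fin n => (1 / n : ℝ))
        (fun k => |x k| ^ p) (fun _ _ => by positivity) (by simp; field_simp)
        (fun _ _ => by positivity)
      have e : ∏ k, |x k| ^ (p / n) = ∏ k, (|x k| ^ p) ^ (1 / n : ℝ) := by
        refine Finset.prod_congr rfl fun k _ => ?_
        rw [← Real.rpow_mul (hpos k).le]; ring_nf
      rw [e]
      refine this.trans ?_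
      unfold Sp
      refine Finset.sum_le_sum fun k _ => mul_le_of_le_one_left (by positivity) ?_
      rw [div_le_one hn0]; exact_mod_cast hn
    have h2 : Sp p x ^ (β / p) ≤ ∏ k, |x k| ^ (β / n) := by
      have hpp : 0 < ∏ k, |x k| ^ (p / n) :=
        Finset.prod_pos fun k _ => Real.rpow_pos_of_pos (hpos k) _
      refine (Real.rpow_le_rpow_of_nonpos hpp h1 (div_neg_of_neg_of_pos hβ hp).le).trans ?_
      rw [← Real.finsetProd_rpow _ _ (fun k _ => by positivity)]
      refine (Finset.prod_congr rfl fun k _ => ?_).le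
      rw [← Real.rpow_mul (hpos k).le]
      congr 1
      field_simp
    have h3 : ∏ k, (1 + |x k|) ^ 2 ≤ (1 + ‖x‖) ^ (2 * n) := by
      calc _ ≤ ∏ k : Fin n, (1 + ‖x‖) ^ 2 := by
            gcongr with k
            have := PiLp.norm_apply_le x k
            rwa [Real.norm_eq_abs] at this
        _ = _ := by simp [pow_mul]
    calc _ ≤ (∏ k, |x k| ^ (β / n)) * (C * (∏ k, (1 + |x k|) ^ 2)⁻¹) := by
          gcongr
          refine (h x).trans ?_
          gcongr
          
      _ = _ := by rw [Finset.prod_mul_distrib, Finset.prod_inv_distrib]; ring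

lemma ft_1d (p : ℝ) (hp : 0 < p) (t : ℝ) (ht : 0 < t) (ξ : ℝ) :
    ∫ z : ℝ, Complex.exp (-Complex.I * ((ξ * z : ℝ) : ℂ)) * (Real.exp (-(t ^ (-p) * |z| ^ p)) : ℂ)
      = ((t * gammaP p (t * ξ) : ℝ) : ℂ) := by
  have h1 : ∀ z : ℝ, Complex.exp (-Complex.I * ((ξ * z : ℝ) : ℂ)) *
      (Real.exp (-(t ^ (-p) * |z| ^ p)) : ℂ)
      = (fun y : ℝ => Complex.exp (-Complex.I * ((t * ξ * y : ℝ) : ℂ)) * (Real.exp (-|y| ^ p) : ℂ)) (z / t) := by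
    intro z
    simp only
    have : |z / t| ^ p = t ^ (-p) * |z| ^ p := by
      rw [abs_div, abs_of_pos ht, Real.div_rpow (abs_nonneg _) ht.le, Real.rpow_neg ht.le]; ring
    rw [this]
    congr 4
    field_simp
  simp_rw [h1]
  rw [Measure.integral_comp_div (fun y : ℝ => Complex.exp (-Complex.I * ((t * ξ * y : ℝ) : ℂ)) * (Real.exp (-|y| ^ p) : ℂ)) t]
  rw [abs_of_pos ht, Complex.real_smul, Complex.ofReal_mul]
  congr 1
  have h2 : ∀ y : ℝ, Complex.exp (-Complex.I * ((t * ξ * y : ℝ) : ℂ)) * (Real.exp (-|y| ^ p) : ℂ)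
      = ((Real.exp (-|y| ^ p) * Real.cos (t * ξ * y) : ℝ) : ℂ)
        - Complex.I * ((Real.exp (-|y| ^ p) * Real.sin (t * ξ * y) : ℝ) : ℂ) := by
    intro y
    rw [show -Complex.I * ((t * ξ * y : ℝ) : ℂ) = ((-(t * ξ * y) : ℝ) : ℂ) * Complex.I by push_cast; ring,
      Complex.exp_mul_I, ← Complex.ofReal_cos, ← Complex.ofReal_sin, Real.cos_neg, Real.sin_neg]
    push_cast; ring
  simp_rw [h2]
  have ic : Integrable (fun y : ℝ => Real.exp (-|y| ^ p) * Real.cos (t * ξ * y)) :=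
    (aux_exp_int p hp).mul_bdd (c := 1)
      (by fun_prop : Continuous fun z : ℝ => Real.cos (t * ξ * z)).aestronglyMeasurable
      (Eventually.of_forall fun z => Real.abs_cos_le_one _)
  have is : Integrable (fun y : ℝ => Real.exp (-|y| ^ p) * Real.sin (t * ξ * y)) :=
    (aux_exp_int p hp).mul_bdd (c := 1)
      (by fun_prop : Continuous fun z : ℝ => Real.sin (t * ξ * z)).aestronglyMeasurable
      (Eventually.of_forall fun z => Real.abs_sin_le_one _)
  have hodd : ∫ y : ℝ, Real.exp (-|y| ^ p) * Real.sin (t * ξ * y) = 0 := by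
    have := integral_neg_eq_self (fun y : ℝ => Real.exp (-|y| ^ p) * Real.sin (t * ξ * y)) volume
    simp only [abs_neg, mul_neg, Real.sin_neg, integral_neg] at this
    linarith
  rw [integral_sub ic.ofReal (is.ofReal.const_mul _), integral_const_mul, integral_complex_ofReal,
    integral_complex_ofReal, hodd]
  simp [gammaP]

lemma exp_scaled_int (p : ℝ) (hp : 0 < p) (t : ℝ) (ht : 0 < t) :
    Integrable (fun z : ℝ => Real.exp (-(t ^ (-p) * |z| ^ p))) := by
  have := (aux_exp_int p hp).comp_div ht.ne'
  refine this.congr (Eventually.of_forall fun z => ?_)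
  have : |z / t| ^ p = t ^ (-p) * |z| ^ p := by
    rw [abs_div, abs_of_pos ht, Real.div_rpow (abs_nonneg _) ht.le, Real.rpow_neg ht.le]; ring
  simp only [this]

lemma exp_Sp_int {n : ℕ} (p : ℝ) (hp : 0 < p) (t : ℝ) (ht : 0 < t) :
    Integrable (fun x : EuclideanSpace ℝ (Fin n) => Real.exp (-(t ^ (-p) * Sp p x))) := by
  have := integrable_prod_E (n := n) _ (fun _ => exp_scaled_int p hp t ht)
  refine this.congr (Eventually.of_forall fun x => ?_)
  simp only [Sp]
  rw [← Real.exp_sum, Finset.sum_neg_distrib, Finset.mul_sum]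

lemma ft_nd {n : ℕ} (p : ℝ) (hp : 0 < p) (t : ℝ) (ht : 0 < t) (ξ : EuclideanSpace ℝ (Fin n)) :
    ∫ x : EuclideanSpace ℝ (Fin n), Complex.exp (-Complex.I * (⟪ξ, x⟫ : ℂ)) *
      (Real.exp (-(t ^ (-p) * Sp p x)) : ℂ) = ((t ^ n * ∏ k, gammaP p (t * ξ k) : ℝ) : ℂ) := by
  have h : ∀ x : EuclideanSpace ℝ (Fin n), Complex.exp (-Complex.I * (⟪ξ, x⟫ : ℂ)) *
      (Real.exp (-(t ^ (-p) * Sp p x)) : ℂ) = ∏ k, (fun (k : Fin n) (z : ℝ) =>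
        Complex.exp (-Complex.I * ((ξ k * z : ℝ) : ℂ)) *
          (Real.exp (-(t ^ (-p) * |z| ^ p)) : ℂ)) k (x k) := by
    intro x
    simp only
    rw [Finset.prod_mul_distrib, ← Complex.exp_sum, ← Complex.ofReal_prod, ← Real.exp_sum]
    congr 2
    · rw [← Finset.mul_sum, PiLp.inner_apply, ← Complex.ofReal_sum]
      simp [mul_comm]
    · rw [Sp, Finset.sum_neg_distrib, Finset.mul_sum]
  refine (integral_congr_ae (Eventually.of_forall h)).trans ((integral_prod_E (fun (k : Fin n) (z : ℝ) =>
        Complex.exp (-Complex.I * ((ξ k * z : ℝ) : ℂ)) *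
          (Real.exp (-(t ^ (-p) * |z| ^ p)) : ℂ))).trans ?_)
  simp_rw [ft_1d p hp t ht]
  rw [← Complex.ofReal_prod, Finset.prod_mul_distrib]
  simp

lemma F_formula {n : ℕ} (p : ℝ) (hp : 0 < p) (t : ℝ) (ht : 0 < t)
    (φ : SchwartzMap (EuclideanSpace ℝ (Fin n)) ℂ) :
    ∫ x, (Real.exp (-(t ^ (-p) * Sp p x)) : ℂ) * ftNU ⇑φ x =
      ∫ ξ, ((t ^ n * ∏ k, gammaP p (t * ξ k) : ℝ) : ℂ) * φ ξ := by
  have h1 : ∀ x, (Real.exp (-(t ^ (-p) * Sp p x)) : ℂ) * ftNU ⇑φ x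
      = ∫ ξ, (Real.exp (-(t ^ (-p) * Sp p x)) : ℂ) *
        (Complex.exp (-Complex.I * (⟪ξ, x⟫ : ℂ)) * φ ξ) := fun x => by
    rw [integral_const_mul]; rfl
  simp_rw [h1]
  rw [integral_integral_swap]
  · congr 1; ext ξ
    rw [← ft_nd p hp t ht ξ, ← integral_mul_const]
    congr 1; ext x; ring
  · have := ((exp_Sp_int (n := n) p hp t ht).ofReal (𝕜 := ℂ)).mul_prod (φ.integrable (μ := volume))
    have h2 := this.mul_bdd (c := 1) (g := fun z : EuclideanSpace ℝ (Fin n) × EuclideanSpace ℝ (Fin n) =>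
      Complex.exp (-Complex.I * ((⟪z.2, z.1⟫ : ℝ) : ℂ))) ?_ ?_
    · refine h2.congr (Eventually.of_forall fun z => ?_)
      simp only [Function.uncurry]
      change (Real.exp (-(t ^ (-p) * Sp p z.1)) : ℂ) * φ z.2 * (Complex.exp (-Complex.I * (⟪z.2, z.1⟫ : ℂ))) = (Real.exp (-(t ^ (-p) * Sp p z.1)) : ℂ) *
        (Complex.exp (-Complex.I * (⟪z.2, z.1⟫ : ℂ)) * φ z.2)
      ring
    · exact Continuous.aestronglyMeasurable (by fun_prop)
    · refine Eventually.of_forall fun z => ?_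
      rw [Complex.norm_exp]; simp


/-- signed Taylor remainder of the exponential -/
def Gm (m : ℕ) (v : ℝ) : ℝ :=
  (-1) ^ m * (Real.exp (-v) - ∑ j ∈ Finset.range m, (-v) ^ j / (j.factorial : ℝ))

lemma Gm_zero (v : ℝ) : Gm 0 v = Real.exp (-v) := by simp [Gm]

lemma Gm_succ (m : ℕ) (v : ℝ) : Gm (m + 1) v = v ^ m / (m.factorial : ℝ) - Gm m v := by
  simp only [Gm, Finset.sum_range_succ, pow_succ]
  have : (-1 : ℝ) ^ m * (-v) ^ m = v ^ m := by rw [← mul_pow]; simp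
  rw [← this]; ring

lemma Gm_at_zero (m : ℕ) : Gm (m + 1) 0 = 0 := by
  induction m with
  | zero => simp [Gm_succ, Gm_zero]
  | succ k ih => rw [Gm_succ, ih]; simp

lemma Gm_deriv (m : ℕ) (v : ℝ) : HasDerivAt (Gm (m + 1)) (Gm m v) v := by
  induction m with
  | zero =>
    have h : Gm (0 + 1) = fun v => 1 - Real.exp (-v) := by
      ext v; rw [Gm_succ, Gm_zero]; simp
    rw [h, Gm_zero]
    have := ((hasDerivAt_neg v).exp).const_sub 1
    exact this.congr_deriv (by ring)
  | succ k ih =>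
    have h : Gm (k + 1 + 1) = fun v => v ^ (k + 1) / ((k + 1).factorial : ℝ) - Gm (k + 1) v := by
      ext v; rw [Gm_succ]
    rw [h]
    have := ((hasDerivAt_pow (k + 1) v).div_const ((k + 1).factorial : ℝ)).sub ih
    refine this.congr_deriv ?_
    rw [Gm_succ, Nat.factorial_succ]
    have : (k.factorial : ℝ) ≠ 0 := by positivity
    push_cast
    field_simp
    try simp

lemma Gm_cont (m : ℕ) : Continuous (Gm m) := by
  unfold Gm; fun_prop

lemma Gm_nonneg (m : ℕ) (v : ℝ) (hv : 0 ≤ v) : 0 ≤ Gm m v := by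
  induction m generalizing v with
  | zero => rw [Gm_zero]; positivity
  | succ k ih =>
    have hm : MonotoneOn (Gm (k + 1)) (Ici 0) := by
      refine monotoneOn_of_hasDerivWithinAt_nonneg (convex_Ici 0) (Gm_cont _).continuousOn
        (f' := Gm k) (fun x hx => (Gm_deriv k x).hasDerivWithinAt) (fun x hx => ih x ?_)
      exact interior_subset hx
    have := hm (self_mem_Ici) hv hv
    rwa [Gm_at_zero] at this

lemma Gm_le (m : ℕ) (v : ℝ) (hv : 0 ≤ v) : Gm m v ≤ v ^ m / (m.factorial : ℝ) := by
  have := Gm_succ m v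
  have := Gm_nonneg (m + 1) v hv
  linarith

lemma Gm_succ_le (m : ℕ) (v : ℝ) (hv : 0 ≤ v) : Gm (m + 1) v ≤ v ^ m / (m.factorial : ℝ) := by
  have := Gm_succ m v
  have := Gm_nonneg m v hv
  linarith

lemma Gm_int (m : ℕ) (s : ℝ) (h1 : s < m) (h2 : m = 0 ∨ (m : ℝ) - 1 < s) :
    IntegrableOn (fun u : ℝ => u ^ (-1 - s) * Gm m u) (Ioi 0) := by
  rcases m with _ | m
  · simp only [Gm_zero]
    have := Real.GammaIntegral_convergent (s := -s) (by simpa using h1)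
    refine this.congr_fun (fun u _ => ?_) measurableSet_Ioi
    simp only
    rw [mul_comm]; congr 2; ring
  · simp only [Nat.add_eq_zero_iff, one_ne_zero, and_false, false_or] at h2
    push_cast at h1 h2
    have hmeas : ∀ S : Set ℝ, AEStronglyMeasurable (fun u : ℝ => u ^ (-1 - s) * Gm (m + 1) u) (volume.restrict S) := fun S =>
      ((measurable_id.pow_const _).mul (Gm_cont _).measurable).aestronglyMeasurable
    have hle : ∀ (u : ℝ) (k : ℕ), (0 < u) → Gm (m+1) u ≤ u ^ k / (k.factorial : ℝ) →
        ‖u ^ (-1 - s) * Gm (m + 1) u‖ ≤ u ^ (-1 - s + k) := by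
      intro u k hu h
      rw [Real.norm_eq_abs, abs_of_nonneg (mul_nonneg (by positivity) (Gm_nonneg _ _ hu.le)),
        Real.rpow_add hu, Real.rpow_natCast]
      refine mul_le_mul_of_nonneg_left (h.trans ?_) (by positivity)
      exact div_le_self (by positivity) (by exact_mod_cast Nat.factorial_pos k)
    rw [← Ioc_union_Ioi_eq_Ioi (zero_le_one' ℝ)]
    refine IntegrableOn.union ?_ ?_
    · have : IntegrableOn (fun u : ℝ => u ^ (-1 - s + (m + 1 : ℕ))) (Ioc 0 1) := by
        rw [← intervalIntegrable_iff_integrableOn_Ioc_of_le zero_le_one]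
        apply intervalIntegral.intervalIntegrable_rpow'
        push_cast; linarith
      refine Integrable.mono' this (hmeas _) ?_
      refine (ae_restrict_iff' measurableSet_Ioc).2 (Eventually.of_forall fun u hu => ?_)
      exact hle u (m + 1) hu.1 (Gm_le _ _ hu.1.le)
    · have : IntegrableOn (fun u : ℝ => u ^ (-1 - s + m)) (Ioi 1) :=
        integrableOn_Ioi_rpow_of_lt (by linarith) one_pos
      refine Integrable.mono' this (hmeas _) ?_
      refine (ae_restrict_iff' measurableSet_Ioi).2 (Eventually.of_forall fun u hu => ?_)
      have hu0 : 0 < u := one_pos.trans hu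
      exact hle u m hu0 (Gm_succ_le _ _ hu0.le)

lemma Gm_integral (m : ℕ) (s : ℝ) (h1 : s < m) (h2 : m = 0 ∨ (m : ℝ) - 1 < s) :
    ∫ u in Ioi (0 : ℝ), u ^ (-1 - s) * Gm m u = (-1) ^ m * Real.Gamma (-s) := by
  induction m generalizing s with
  | zero =>
    rw [Real.Gamma_eq_integral (by simpa using h1)]
    simp only [Gm_zero, pow_zero, one_mul]
    refine setIntegral_congr_fun measurableSet_Ioi (fun u _ => ?_)
    beta_reduce
    rw [mul_comm]; congr 2; ring
  | succ m ih =>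
    have hi := Gm_int (m + 1) s h1 h2
    simp only [Nat.add_eq_zero_iff, one_ne_zero, and_false, false_or] at h2
    push_cast at h1 h2
    have h2' : (m : ℝ) < s := by linarith
    have hs : 0 < s := lt_of_le_of_lt (by positivity) h2'
    have e1 : s - 1 < m := by linarith
    have e2 : m = 0 ∨ (m : ℝ) - 1 < s - 1 := Or.inr (by linarith)
    have hi' := Gm_int m (s - 1) e1 e2
    have ih' := ih (s - 1) e1 e2
    rw [show -1 - (s - 1) = -s by ring] at hi' ih'
    rw [show -(s - 1) = -s + 1 by ring, Real.Gamma_add_one (by linarith)] at ih'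
    have hu' : ∀ x ∈ Ioi (0 : ℝ), HasDerivAt (fun u : ℝ => u ^ (-s)) (-s * x ^ (-1 - s)) x := fun x hx => by
      have := Real.hasDerivAt_rpow_const (x := x) (p := -s) (Or.inl (ne_of_gt hx))
      rwa [show -s - 1 = -1 - s by ring] at this
    have key := integral_Ioi_mul_deriv_eq_deriv_mul (a := 0) (a' := 0) (b' := 0)
      (u := fun u : ℝ => u ^ (-s)) (u' := fun u => -s * u ^ (-1 - s))
      (v := Gm (m + 1)) (v' := Gm m) hu' (fun x _ => Gm_deriv m x) hi'
      (by
        have : IntegrableOn _ (Ioi (0 : ℝ)) := hi.const_mul (-s)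
        refine IntegrableOn.congr_fun this (fun u _ => ?_) measurableSet_Ioi
        simp only [Pi.mul_apply]; ring) ?_ ?_
    · rw [ih'] at key
      have : ∫ x in Ioi (0 : ℝ), -s * x ^ (-1 - s) * Gm (m + 1) x
          = -s * ∫ x in Ioi (0 : ℝ), x ^ (-1 - s) * Gm (m + 1) x := by
        rw [← integral_const_mul]; congr 1; ext x; ring
      rw [this] at key
      have h3 : s * (∫ x in Ioi (0 : ℝ), x ^ (-1 - s) * Gm (m + 1) x) =
        s * ((-1) ^ (m + 1) * Real.Gamma (-s)) := by
        rw [pow_succ]; linear_combination -key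
      exact mul_left_cancel₀ hs.ne' h3
    · have hb : ∀ᶠ u : ℝ in 𝓝[>] 0, ((fun u : ℝ => u ^ (-s)) * Gm (m + 1)) u ≤ u ^ (m + 1 - s) := by
        filter_upwards [self_mem_nhdsWithin] with u hu
        have hu : 0 < u := hu
        rw [show (m : ℝ) + 1 - s = -s + ((m + 1 : ℕ) : ℝ) by push_cast; ring, Real.rpow_add hu, Real.rpow_natCast]
        refine mul_le_mul_of_nonneg_left ((Gm_le _ _ hu.le).trans ?_) (by positivity)
        exact div_le_self (by positivity) (by exact_mod_cast Nat.factorial_pos _)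
      have h0 : Tendsto (fun u : ℝ => u ^ (m + 1 - s)) (𝓝[>] 0) (𝓝 0) := by
        have := (Real.continuousAt_rpow_const 0 (m + 1 - s) (Or.inr (by linarith))).tendsto
        rw [Real.zero_rpow (by linarith)] at this
        exact this.mono_left nhdsWithin_le_nhds
      refine tendsto_of_tendsto_of_tendsto_of_le_of_le' tendsto_const_nhds h0 ?_ hb
      filter_upwards [self_mem_nhdsWithin] with u hu
      have hu : 0 < u := hu
      exact mul_nonneg (by positivity) (Gm_nonneg _ _ hu.le)
    · have hb : ∀ᶠ u : ℝ in atTop, ((fun u : ℝ => u ^ (-s)) * Gm (m + 1)) u ≤ u ^ (-(s - m)) := by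
        filter_upwards [Ioi_mem_atTop 0] with u hu
        have hu : 0 < u := hu
        rw [show -(s - (m : ℝ)) = -s + (m : ℝ) by ring, Real.rpow_add hu, Real.rpow_natCast]
        refine mul_le_mul_of_nonneg_left ((Gm_succ_le _ _ hu.le).trans ?_) (by positivity)
        exact div_le_self (by positivity) (by exact_mod_cast Nat.factorial_pos _)
      refine tendsto_of_tendsto_of_tendsto_of_le_of_le' tendsto_const_nhds
        (tendsto_rpow_neg_atTop (by linarith)) ?_ hb
      filter_upwards [Ioi_mem_atTop 0] with u hu
      have hu : 0 < u := hu
      exact mul_nonneg (by positivity) (Gm_nonneg _ _ hu.le)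

lemma Gm_int_scaled (m : ℕ) (s : ℝ) (h1 : s < m) (h2 : m = 0 ∨ (m : ℝ) - 1 < s) (S : ℝ) (hS : 0 < S) :
    IntegrableOn (fun u : ℝ => u ^ (-1 - s) * Gm m (u * S)) (Ioi 0) ∧
    ∫ u in Ioi (0 : ℝ), u ^ (-1 - s) * Gm m (u * S) = S ^ s * ((-1) ^ m * Real.Gamma (-s)) := by
  have hpt : ∀ u ∈ Ioi (0 : ℝ), S ^ (1 + s) * (fun u : ℝ => u ^ (-1 - s) * Gm m u) (S * u) =
      u ^ (-1 - s) * Gm m (u * S) := by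
    intro u hu
    have hu : 0 < u := hu
    simp only
    rw [Real.mul_rpow hS.le hu.le, mul_comm S u]
    have : S ^ (1 + s) * S ^ (-1 - s) = 1 := by
      rw [← Real.rpow_add hS]; simp [show 1 + s + (-1 - s) = 0 by ring]
    linear_combination (u ^ (-1 - s) * Gm m (u * S)) * this
  constructor
  · have := (integrableOn_Ioi_comp_mul_left_iff (fun u : ℝ => u ^ (-1 - s) * Gm m u) 0 hS).2
      (by simpa using Gm_int m s h1 h2)
    exact IntegrableOn.congr_fun (this.const_mul (S ^ (1 + s))) hpt measurableSet_Ioi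
  · rw [← setIntegral_congr_fun measurableSet_Ioi hpt, integral_const_mul,
      integral_comp_mul_left_Ioi (fun u : ℝ => u ^ (-1 - s) * Gm m u) _ hS, mul_zero, Gm_integral m s h1 h2, smul_eq_mul, Real.rpow_add hS, Real.rpow_one]
    field_simp


lemma gammaP_cont (p : ℝ) (hp : 0 < p) : Continuous (gammaP p) := by
  refine continuous_of_dominated (bound := fun z : ℝ => Real.exp (-|z| ^ p)) ?_ ?_ (aux_exp_int p hp) ?_
  · intro t
    have h : Continuous fun z : ℝ => Real.exp (-|z| ^ p) * Real.cos (t * z) := by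
      have : Continuous fun z : ℝ => |z| ^ p := continuous_abs.rpow_const (fun _ => Or.inr hp.le)
      fun_prop
    exact h.aestronglyMeasurable
  · intro t
    refine Eventually.of_forall fun z => ?_
    rw [norm_mul, Real.norm_eq_abs, abs_of_pos (Real.exp_pos _)]
    exact mul_le_of_le_one_right (Real.exp_pos _).le (Real.abs_cos_le_one _)
  · exact Eventually.of_forall fun z => by fun_prop

/-- one-dimensional majorant -/
def gB (n : ℕ) (p β t : ℝ) : ℝ := if t ≤ 1 then t ^ ((n : ℝ) + β - 1) else t ^ (β - 1 - n * p)

lemma gB_nonneg (n : ℕ) (p β t : ℝ) (ht : 0 < t) : 0 ≤ gB n p β t := by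
  unfold gB; split_ifs <;> positivity

lemma gB_int (n : ℕ) (p β : ℝ) (hβ1 : -(n : ℝ) < β) (hβ2 : β < p * n) :
    IntegrableOn (gB n p β) (Ioi 0) := by
  rw [← Ioc_union_Ioi_eq_Ioi (zero_le_one' ℝ)]
  refine IntegrableOn.union ?_ ?_
  · have : IntegrableOn (fun u : ℝ => u ^ ((n : ℝ) + β - 1)) (Ioc 0 1) := by
      rw [← intervalIntegrable_iff_integrableOn_Ioc_of_le zero_le_one]
      apply intervalIntegral.intervalIntegrable_rpow'
      linarith
    refine this.congr_fun (fun u hu => ?_) measurableSet_Ioc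
    simp [gB, hu.2]
  · have : IntegrableOn (fun u : ℝ => u ^ (β - 1 - n * p)) (Ioi 1) :=
      integrableOn_Ioi_rpow_of_lt (by linarith [mul_comm p (n : ℝ)]) one_pos
    refine this.congr_fun (fun u hu => ?_) measurableSet_Ioi
    have hu : 1 < u := hu
    simp [gB, hu.not_ge]

lemma prod_decay {n : ℕ} (p : ℝ) (C : ℝ) (hC : 0 ≤ C)
    (h2 : ∀ t, t ≠ 0 → |gammaP p t| ≤ C * |t| ^ (-(1 + p))) (t : ℝ) (ht : 0 < t)
    (ξ : EuclideanSpace ℝ (Fin n)) (hξ : ∀ k, ξ k ≠ 0) :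
    |∏ k, gammaP p (t * ξ k)| ≤ C ^ n * t ^ (-(n * (1 + p))) * ∏ k, |ξ k| ^ (-(1 + p)) := by
  rw [Finset.abs_prod]
  calc ∏ k, |gammaP p (t * ξ k)| ≤ ∏ k : Fin n, (C * t ^ (-(1 + p))) * |ξ k| ^ (-(1 + p)) := by
        refine Finset.prod_le_prod (fun _ _ => abs_nonneg _) (fun k _ => ?_)
        refine (h2 _ (mul_ne_zero ht.ne' (hξ k))).trans_eq ?_
        rw [abs_mul, Real.mul_rpow (abs_nonneg _) (abs_nonneg _), abs_of_pos ht]; ring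
    _ = _ := by
        rw [Finset.prod_mul_distrib]
        simp only [Finset.prod_const, Finset.card_univ, Fintype.card_fin, mul_pow]
        rw [← Real.rpow_natCast (t ^ _), ← Real.rpow_mul ht.le]
        congr 3; ring

lemma prod_bdd {n : ℕ} (p : ℝ) (C : ℝ) 
    (h1 : ∀ t, |gammaP p t| ≤ C) (t : ℝ) (ξ : EuclideanSpace ℝ (Fin n)) :
    |∏ k, gammaP p (t * ξ k)| ≤ C ^ n := by
  rw [Finset.abs_prod]
  calc ∏ k, |gammaP p (t * ξ k)| ≤ ∏ k : Fin n, C :=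
        Finset.prod_le_prod (fun _ _ => abs_nonneg _) (fun k _ => h1 _)
    _ = _ := by simp

lemma kernel_bound {n : ℕ} (p β : ℝ) (C : ℝ) (hC : 0 ≤ C)
    (h1 : ∀ t, |gammaP p t| ≤ C)
    (h2 : ∀ t, t ≠ 0 → |gammaP p t| ≤ C * |t| ^ (-(1 + p))) (t : ℝ) (ht : 0 < t)
    (ξ : EuclideanSpace ℝ (Fin n)) (hξ : ∀ k, ξ k ≠ 0) :
    |t ^ ((n : ℝ) + β - 1) * ∏ k, gammaP p (t * ξ k)| ≤
      gB n p β t * (C ^ n * (1 + ∏ k, |ξ k| ^ (-(1 + p)))) := by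
  have hW : 0 ≤ ∏ k, |ξ k| ^ (-(1 + p)) := Finset.prod_nonneg fun k _ => by positivity
  rw [abs_mul, abs_of_pos (Real.rpow_pos_of_pos ht _)]
  unfold gB
  split_ifs with h
  · refine mul_le_mul_of_nonneg_left ((prod_bdd p C h1 t ξ).trans ?_) (by positivity)
    exact le_mul_of_one_le_right (by positivity) (by linarith)
  · calc _ ≤ t ^ ((n : ℝ) + β - 1) * (C ^ n * t ^ (-(n * (1 + p))) * ∏ k, |ξ k| ^ (-(1 + p))) :=
        mul_le_mul_of_nonneg_left (prod_decay p C hC h2 t ht ξ hξ) (by positivity)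
      _ = t ^ (β - 1 - n * p) * (C ^ n * (∏ k, |ξ k| ^ (-(1 + p)))) := by
        rw [show β - 1 - n * p = ((n : ℝ) + β - 1) + (-(n * (1 + p))) by ring, Real.rpow_add ht]
        ring
      _ ≤ _ := by
        gcongr; linarith

lemma kernel_int {n : ℕ} (p : ℝ) (hp : 0 < p) (β : ℝ) (hβ1 : -(n : ℝ) < β) (hβ2 : β < p * n)
    (ξ : EuclideanSpace ℝ (Fin n)) (hξ : ∀ k, ξ k ≠ 0) :
    IntegrableOn
      (fun t : ℝ => t ^ ((n : ℝ) + β - 1) * ∏ k, gammaP p (t * ξ k)) (Ioi 0) := by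
  obtain ⟨C, hC, h1, h2⟩ := gammaP_decay p hp
  refine Integrable.mono' ((gB_int n p β hβ1 hβ2).mul_const _) ?_
    ((ae_restrict_iff' measurableSet_Ioi).2 (Eventually.of_forall fun t ht =>
      kernel_bound p β C hC h1 h2 t ht ξ hξ))
  have := gammaP_cont p hp
  exact ((measurable_id.pow_const _).mul
    (by fun_prop : Continuous fun t : ℝ => ∏ k, gammaP p (t * ξ k)).measurable).aestronglyMeasurable

lemma weight_int {n : ℕ} (p : ℝ) (hp : 0 < p) (φ : SchwartzMap (EuclideanSpace ℝ (Fin n)) ℂ)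
    (hφ : tsupport ⇑φ ⊆ {x : EuclideanSpace ℝ (Fin n) | ∀ k, x k ≠ 0}) :
    Integrable (fun ξ => (1 + ∏ k, |ξ k| ^ (-(1 + p))) * ‖φ ξ‖) := by
  refine ((φ.integrable (μ := volume)).norm.add (flat_integrable φ hφ (1 + p) (by linarith))).congr
    (Eventually.of_forall fun ξ => ?_)
  simp only [Pi.add_apply]; ring

lemma kernel_fubini {n : ℕ} (p : ℝ) (hp : 0 < p) (β : ℝ) (hβ1 : -(n : ℝ) < β) (hβ2 : β < p * n)
    (φ : SchwartzMap (EuclideanSpace ℝ (Fin n)) ℂ)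
    (hφ : tsupport ⇑φ ⊆ {x : EuclideanSpace ℝ (Fin n) | ∀ k, x k ≠ 0}) :
    ∫ t in Ioi (0 : ℝ), ∫ ξ, ((t ^ ((n : ℝ) + β - 1) * ∏ k, gammaP p (t * ξ k) : ℝ) : ℂ) * φ ξ
      = ∫ ξ, ((∫ t in Ioi (0 : ℝ), t ^ ((n : ℝ) + β - 1) * ∏ k, gammaP p (t * ξ k) : ℝ) : ℂ) * φ ξ := by
  rw [integral_integral_swap]
  · congr 1; ext ξ
    rw [integral_mul_const, integral_complex_ofReal]
  · obtain ⟨C, hC, h1, h2⟩ := gammaP_decay p hp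
    have hd := (gB_int n p β hβ1 hβ2).integrable.mul_prod ((weight_int p hp φ hφ).const_mul (C ^ n))
    refine Integrable.mono' hd ?_ ?_
    · have hc := gammaP_cont p hp
      have m1 : Measurable fun z : ℝ × EuclideanSpace ℝ (Fin n) => z.1 ^ ((n : ℝ) + β - 1) :=
        measurable_fst.pow_const _
      have m2 : Measurable fun z : ℝ × EuclideanSpace ℝ (Fin n) => ∏ k, gammaP p (z.1 * z.2 k) :=
        (by fun_prop : Continuous fun z : ℝ × EuclideanSpace ℝ (Fin n) =>
          ∏ k, gammaP p (z.1 * z.2 k)).measurable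
      have m3 : Measurable fun z : ℝ × EuclideanSpace ℝ (Fin n) => φ z.2 :=
        (φ.continuous.comp continuous_snd).measurable
      exact ((Complex.measurable_ofReal.comp (m1.mul m2)).mul m3).aestronglyMeasurable
    · have hae : ∀ᵐ z : ℝ × EuclideanSpace ℝ (Fin n) ∂((volume.restrict (Ioi (0 : ℝ))).prod volume),
          z.1 ∈ Ioi (0 : ℝ) :=
        Measure.quasiMeasurePreserving_fst.ae (ae_restrict_mem measurableSet_Ioi)
      filter_upwards [hae] with z hz
      simp only [Function.uncurry]
      rw [norm_mul, Complex.norm_real, Real.norm_eq_abs]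
      by_cases h0 : φ z.2 = 0
      · simp [h0]
      · have hk : ∀ k, z.2 k ≠ 0 := hφ (subset_tsupport _ h0)
        calc _ ≤ gB n p β z.1 * (C ^ n * (1 + ∏ k, |z.2 k| ^ (-(1 + p)))) * ‖φ z.2‖ :=
              mul_le_mul_of_nonneg_right (kernel_bound p β C hC h1 h2 z.1 hz z.2 hk) (norm_nonneg _)
          _ = _ := by ring

lemma F_bound {n : ℕ} (p : ℝ) (hp : 0 < p) (φ : SchwartzMap (EuclideanSpace ℝ (Fin n)) ℂ)
    (hφ : tsupport ⇑φ ⊆ {x : EuclideanSpace ℝ (Fin n) | ∀ k, x k ≠ 0}) :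
    ∃ K, ∀ u : ℝ, 0 < u → ‖∫ x, (Real.exp (-(u * Sp p x)) : ℂ) * ftNU ⇑φ x‖ ≤ K * u ^ n := by
  obtain ⟨C, hC, h1, h2⟩ := gammaP_decay p hp
  refine ⟨C ^ n * ∫ ξ, ‖φ ξ‖ * ∏ k, |ξ k| ^ (-(1 + p)), fun u hu => ?_⟩
  have ht : 0 < u ^ (-p⁻¹) := Real.rpow_pos_of_pos hu _
  have hut : u = (u ^ (-p⁻¹)) ^ (-p) := by
    rw [← Real.rpow_mul hu.le, neg_mul_neg, inv_mul_cancel₀ hp.ne', Real.rpow_one]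
  set t := u ^ (-p⁻¹) with htdef
  have hF := F_formula p hp t ht φ
  rw [← hut] at hF
  rw [hF]
  have hi := (flat_integrable φ hφ (1 + p) (by linarith)).const_mul (C ^ n * u ^ n)
  refine (norm_integral_le_of_norm_le hi (Eventually.of_forall fun ξ => ?_)).trans_eq ?_
  · rw [norm_mul, Complex.norm_real, Real.norm_eq_abs]
    by_cases h0 : φ ξ = 0
    · simp [h0]
    · have hk : ∀ k, ξ k ≠ 0 := hφ (subset_tsupport _ h0)
      have hb := prod_decay p C hC h2 t ht ξ hk
      have e : t ^ n * t ^ (-(n * (1 + p))) = u ^ n := by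
        rw [hut, ← Real.rpow_natCast, ← Real.rpow_natCast (t ^ (-p)), ← Real.rpow_mul ht.le, ← Real.rpow_add ht]
        congr 1; ring
      rw [abs_mul, abs_of_pos (pow_pos ht n)]
      calc _ ≤ t ^ n * (C ^ n * t ^ (-(n * (1 + p))) * ∏ k, |ξ k| ^ (-(1 + p))) * ‖φ ξ‖ := by gcongr
        _ = (t ^ n * t ^ (-(n * (1 + p)))) * (C ^ n * (∏ k, |ξ k| ^ (-(1 + p)))  * ‖φ ξ‖) := by ring
        _ = _ := by rw [e]; ring
  · rw [integral_const_mul]; ring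

lemma poly_zero (n : ℕ) (c : ℕ → ℂ) (K : ℝ)
    (h : ∀ u : ℝ, 0 < u → ‖∑ j ∈ Finset.range n, (u : ℂ) ^ j * c j‖ ≤ K * u ^ n) :
    ∀ j < n, c j = 0 := by
  induction n generalizing c with
  | zero => intro j hj; omega
  | succ n ih =>
    have hc0 : c 0 = 0 := by
      have h1 : Tendsto (fun u : ℝ => ∑ j ∈ Finset.range (n + 1), (u : ℂ) ^ j * c j) (𝓝[>] 0) (𝓝 (c 0)) := by
        have : Continuous (fun u : ℝ => ∑ j ∈ Finset.range (n + 1), (u : ℂ) ^ j * c j) := by fun_prop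
        have h2 := this.tendsto 0
        rw [Finset.sum_range_succ'] at h2
        simp at h2
        exact h2.mono_left nhdsWithin_le_nhds
      have h2 : Tendsto (fun u : ℝ => ∑ j ∈ Finset.range (n + 1), (u : ℂ) ^ j * c j) (𝓝[>] 0) (𝓝 0) := by
        have h3 : Tendsto (fun u : ℝ => K * u ^ (n + 1)) (𝓝[>] 0) (𝓝 0) := by
          have : Continuous (fun u : ℝ => K * u ^ (n + 1)) := by fun_prop
          have h2 := this.tendsto 0
          simp at h2
          exact h2.mono_left nhdsWithin_le_nhds
        refine squeeze_zero_norm' ?_ h3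
        filter_upwards [self_mem_nhdsWithin] with u hu using h u hu
      exact tendsto_nhds_unique h1 h2
    have := ih (fun j => c (j + 1)) (fun u hu => by
      have h1 := h u hu
      rw [Finset.sum_range_succ', hc0] at h1
      have h2 : ∑ k ∈ Finset.range n, (u : ℂ) ^ (k + 1) * c (k + 1) + (u : ℂ) ^ 0 * 0 =
        u * ∑ j ∈ Finset.range n, (u : ℂ) ^ j * c (j + 1) := by
        rw [Finset.mul_sum, mul_zero, add_zero]
        refine Finset.sum_congr rfl fun k _ => ?_
        ring
      rw [h2, norm_mul, Complex.norm_real, Real.norm_eq_abs, abs_of_pos hu] at h1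
      refine le_of_mul_le_mul_left (h1.trans_eq ?_) hu
      ring)
    intro j hj
    rcases j with _ | j
    · exact hc0
    · exact this j (by omega)

lemma Sp_pow_int {n : ℕ} (p : ℝ) (hp : 0 < p) (φ : SchwartzMap (EuclideanSpace ℝ (Fin n)) ℂ) (j : ℕ) :
    Integrable (fun x => ((Sp p x ^ j : ℝ) : ℂ) * ftNU ⇑φ x) := by
  have h := Sp_int_pos p hp j (by positivity) φ
  have hS := Sp_cont (n := n) p hp
  have hf := ftNU_cont φ
  refine h.mono' (by fun_prop : Continuous _).aestronglyMeasurable (Eventually.of_forall fun x => ?_)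
  rw [norm_mul, Complex.norm_real, Real.norm_eq_abs, abs_of_nonneg (pow_nonneg (Sp_nonneg p x) _),
    Real.rpow_natCast]

lemma Gm_psi_int {n : ℕ} (p : ℝ) (hp : 0 < p) (φ : SchwartzMap (EuclideanSpace ℝ (Fin n)) ℂ) (m : ℕ)
    (u : ℝ) (hu : 0 < u) :
    Integrable (fun x => (Gm m (u * Sp p x) : ℂ) * ftNU ⇑φ x) := by
  have h := (Sp_int_pos p hp m (by positivity) φ).const_mul (u ^ m)
  have hS := Sp_cont (n := n) p hp
  have hf := ftNU_cont φ
  have hG := Gm_cont m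
  refine h.mono' (by fun_prop : Continuous _).aestronglyMeasurable (Eventually.of_forall fun x => ?_)
  have h0 : 0 ≤ u * Sp p x := mul_nonneg hu.le (Sp_nonneg p x)
  rw [norm_mul, Complex.norm_real, Real.norm_eq_abs, abs_of_nonneg (Gm_nonneg _ _ h0), Real.rpow_natCast,
    ← mul_assoc, ← mul_pow]
  refine mul_le_mul_of_nonneg_right ((Gm_le m _ h0).trans ?_) (norm_nonneg _)
  exact div_le_self (by positivity) (by exact_mod_cast Nat.factorial_pos _)

lemma Gm_psi {n : ℕ} (p : ℝ) (hp : 0 < p) (φ : SchwartzMap (EuclideanSpace ℝ (Fin n)) ℂ) (m : ℕ)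
    (u : ℝ) (hu : 0 < u) :
    ∫ x, (Gm m (u * Sp p x) : ℂ) * ftNU ⇑φ x = (-1) ^ m *
      ((∫ x, (Real.exp (-(u * Sp p x)) : ℂ) * ftNU ⇑φ x) -
        ∑ j ∈ Finset.range m, (u : ℂ) ^ j * ((-1) ^ j / (j.factorial : ℂ) *
          ∫ x, ((Sp p x ^ j : ℝ) : ℂ) * ftNU ⇑φ x)) := by
  induction m with
  | zero => simp [Gm_zero]
  | succ m ih =>
    have h : ∀ x, (Gm (m + 1) (u * Sp p x) : ℂ) * ftNU ⇑φ x =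
      (u : ℂ) ^ m / (m.factorial : ℂ) * (((Sp p x ^ m : ℝ) : ℂ) * ftNU ⇑φ x) -
        (Gm m (u * Sp p x) : ℂ) * ftNU ⇑φ x := fun x => by
      rw [Gm_succ]; push_cast; ring
    simp_rw [h]
    rw [integral_sub ((Sp_pow_int p hp φ m).const_mul _) (Gm_psi_int p hp φ m u hu), ih,
      integral_const_mul, Finset.sum_range_succ]
    have : (-1 : ℂ) ^ m * (-1) ^ m = 1 := by rw [← mul_pow]; simp
    rw [pow_succ]
    linear_combination (-(u : ℂ) ^ m / (m.factorial : ℂ) * ∫ x, ((Sp p x ^ m : ℝ) : ℂ) * ftNU ⇑φ x) * this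

lemma moments_zero {n : ℕ} (p : ℝ) (hp : 0 < p) (φ : SchwartzMap (EuclideanSpace ℝ (Fin n)) ℂ)
    (hφ : tsupport ⇑φ ⊆ {x : EuclideanSpace ℝ (Fin n) | ∀ k, x k ≠ 0}) :
    ∀ j < n, (-1) ^ j / (j.factorial : ℂ) * ∫ x, ((Sp p x ^ j : ℝ) : ℂ) * ftNU ⇑φ x = 0 := by
  obtain ⟨K, hK⟩ := F_bound p hp φ hφ
  refine poly_zero n _ (K + ∫ x, Sp p x ^ (n : ℝ) * ‖ftNU ⇑φ x‖) (fun u hu => ?_)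
  have h := Gm_psi p hp φ n u hu
  set SS := ∑ j ∈ Finset.range n, (u : ℂ) ^ j * ((-1) ^ j / (j.factorial : ℂ) *
          ∫ x, ((Sp p x ^ j : ℝ) : ℂ) * ftNU ⇑φ x)
  have h2 : SS = (∫ x, (Real.exp (-(u * Sp p x)) : ℂ) * ftNU ⇑φ x) - (-1) ^ n *
      ∫ x, (Gm n (u * Sp p x) : ℂ) * ftNU ⇑φ x := by
    rw [h, ← mul_assoc, ← mul_pow]; simp
  rw [h2]
  refine (norm_sub_le _ _).trans ?_
  rw [norm_mul, norm_pow, norm_neg, norm_one, one_pow, one_mul, add_mul]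
  refine add_le_add (hK u hu) ?_
  have hi := (Sp_int_pos p hp n (by positivity) φ).const_mul (u ^ n)
  refine (norm_integral_le_of_norm_le hi (Eventually.of_forall fun x => ?_)).trans_eq ?_
  · have h0 : 0 ≤ u * Sp p x := mul_nonneg hu.le (Sp_nonneg p x)
    rw [norm_mul, Complex.norm_real, Real.norm_eq_abs, abs_of_nonneg (Gm_nonneg _ _ h0), Real.rpow_natCast,
      ← mul_assoc, ← mul_pow]
    refine mul_le_mul_of_nonneg_right ((Gm_le n _ h0).trans ?_) (norm_nonneg _)
    exact div_le_self (by positivity) (by exact_mod_cast Nat.factorial_pos _)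
  · rw [integral_const_mul]; ring

lemma Gm_psi_eq {n : ℕ} (p : ℝ) (hp : 0 < p) (φ : SchwartzMap (EuclideanSpace ℝ (Fin n)) ℂ)
    (hφ : tsupport ⇑φ ⊆ {x : EuclideanSpace ℝ (Fin n) | ∀ k, x k ≠ 0}) (m : ℕ) (hm : m ≤ n)
    (u : ℝ) (hu : 0 < u) :
    ∫ x, (Gm m (u * Sp p x) : ℂ) * ftNU ⇑φ x = (-1) ^ m *
      ∫ x, (Real.exp (-(u * Sp p x)) : ℂ) * ftNU ⇑φ x := by
  rw [Gm_psi p hp φ m u hu, Finset.sum_eq_zero, sub_zero]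
  intro j hj
  rw [moments_zero p hp φ hφ j (lt_of_lt_of_le (Finset.mem_range.1 hj) hm), mul_zero]


lemma main_fubini {n : ℕ} (p : ℝ) (hp : 0 < p) (hn : 1 ≤ n) (s : ℝ) (m : ℕ)
    (h1 : s < m) (h2 : m = 0 ∨ (m : ℝ) - 1 < s)
    (φ : SchwartzMap (EuclideanSpace ℝ (Fin n)) ℂ)
    (hInteg : Integrable (fun x => Sp p x ^ s * ‖ftNU ⇑φ x‖)) :
    (((-1) ^ m * Real.Gamma (-s) : ℝ) : ℂ) * ∫ x, ((Sp p x ^ s : ℝ) : ℂ) * ftNU ⇑φ x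
      = ∫ u in Ioi (0 : ℝ), ((u ^ (-1 - s) : ℝ) : ℂ) * ∫ x, (Gm m (u * Sp p x) : ℂ) * ftNU ⇑φ x := by
  have hS := Sp_cont (n := n) p hp
  have hf := ftNU_cont φ
  have hG := Gm_cont m
  have hpos : ∀ᵐ x : EuclideanSpace ℝ (Fin n), 0 < Sp p x := by
    filter_upwards [ae_coord_ne] with x hx
    unfold Sp
    refine Finset.sum_pos (fun k _ => Real.rpow_pos_of_pos (abs_pos.2 (hx k)) _) ?_
    exact ⟨⟨0, hn⟩, Finset.mem_univ _⟩
  have e1 : ∀ u : ℝ, ((u ^ (-1 - s) : ℝ) : ℂ) * ∫ x, (Gm m (u * Sp p x) : ℂ) * ftNU ⇑φ x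
      = ∫ x, ((u ^ (-1 - s) * Gm m (u * Sp p x) : ℝ) : ℂ) * ftNU ⇑φ x := fun u => by
    rw [← integral_const_mul]; congr 1; ext x; push_cast; ring
  simp_rw [e1]
  rw [← integral_integral_swap (f := fun (x : EuclideanSpace ℝ (Fin n)) (u : ℝ) =>
    ((u ^ (-1 - s) * Gm m (u * Sp p x) : ℝ) : ℂ) * ftNU ⇑φ x)]
  · rw [← integral_const_mul]
    refine integral_congr_ae ?_
    filter_upwards [hpos] with x hx
    rw [integral_mul_const, integral_complex_ofReal, (Gm_int_scaled m s h1 h2 _ hx).2]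
    push_cast; ring
  · have hmeas : AEStronglyMeasurable (Function.uncurry fun (x : EuclideanSpace ℝ (Fin n)) (u : ℝ) =>
        ((u ^ (-1 - s) * Gm m (u * Sp p x) : ℝ) : ℂ) * ftNU ⇑φ x)
        (volume.prod (volume.restrict (Ioi (0 : ℝ)))) := by
      have m1 : Measurable fun z : EuclideanSpace ℝ (Fin n) × ℝ => z.2 ^ (-1 - s) :=
        measurable_snd.pow_const _
      have m2 : Measurable fun z : EuclideanSpace ℝ (Fin n) × ℝ => Gm m (z.2 * Sp p z.1) :=
        (by fun_prop : Continuous fun z : EuclideanSpace ℝ (Fin n) × ℝ => Gm m (z.2 * Sp p z.1)).measurable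
      have m3 : Measurable fun z : EuclideanSpace ℝ (Fin n) × ℝ => ftNU ⇑φ z.1 :=
        (hf.comp continuous_fst).measurable
      exact ((Complex.measurable_ofReal.comp (m1.mul m2)).mul m3).aestronglyMeasurable
    rw [integrable_prod_iff hmeas]
    constructor
    · filter_upwards [hpos] with x hx
      exact ((Gm_int_scaled m s h1 h2 _ hx).1.integrable.ofReal (𝕜 := ℂ)).mul_const (ftNU ⇑φ x)
    · refine (hInteg.const_mul ((-1) ^ m * Real.Gamma (-s))).congr ?_
      filter_upwards [hpos] with x hx
      have : ∫ u in Ioi (0 : ℝ), ‖((u ^ (-1 - s) * Gm m (u * Sp p x) : ℝ) : ℂ) * ftNU ⇑φ x‖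
          = ∫ u in Ioi (0 : ℝ), (u ^ (-1 - s) * Gm m (u * Sp p x)) * ‖ftNU ⇑φ x‖ := by
        refine setIntegral_congr_fun measurableSet_Ioi (fun u hu => ?_)
        have hu : 0 < u := hu
        rw [norm_mul, Complex.norm_real, Real.norm_eq_abs, abs_of_nonneg]
        exact mul_nonneg (by positivity) (Gm_nonneg _ _ (by positivity))
      simp only [Function.uncurry]
      rw [this, integral_mul_const, (Gm_int_scaled m s h1 h2 _ hx).2]
      ring

lemma subst_F {n : ℕ} (p : ℝ) (hp : 0 < p) (β : ℝ)
    (φ : SchwartzMap (EuclideanSpace ℝ (Fin n)) ℂ) :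
    ∫ u in Ioi (0 : ℝ), ((u ^ (-1 - β / p) : ℝ) : ℂ) *
        ∫ x, (Real.exp (-(u * Sp p x)) : ℂ) * ftNU ⇑φ x
      = (p : ℂ) * ∫ t in Ioi (0 : ℝ), ∫ ξ, ((t ^ ((n : ℝ) + β - 1) * ∏ k, gammaP p (t * ξ k) : ℝ) : ℂ) * φ ξ := by
  have h := integral_comp_rpow_Ioi (fun u : ℝ => ((u ^ (-1 - β / p) : ℝ) : ℂ) *
        ∫ x, (Real.exp (-(u * Sp p x)) : ℂ) * ftNU ⇑φ x) (p := -p) (by linarith)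
  rw [← h, ← integral_const_mul]
  refine setIntegral_congr_fun measurableSet_Ioi (fun t ht => ?_)
  have ht : 0 < t := ht
  simp only
  rw [F_formula p hp t ht φ, abs_neg, abs_of_pos hp, Complex.real_smul, ← integral_const_mul,
    ← integral_const_mul, ← integral_const_mul]
  congr 1; ext ξ
  have e : t ^ (-p - 1) * (t ^ (-p)) ^ (-1 - β / p) * t ^ n = t ^ ((n : ℝ) + β - 1) := by
    rw [← Real.rpow_mul ht.le, ← Real.rpow_natCast, ← Real.rpow_add ht, ← Real.rpow_add ht]
    congr 1; field_simp; ring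
  rw [← e]; push_cast; ring

lemma main_eq {n : ℕ} (p : ℝ) (hp : 0 < p) (hn : 1 ≤ n) (β : ℝ)
    (hβ1 : -(n : ℝ) < β) (hβ2 : β < p * n) (hβ3 : ∀ m : ℕ, β / p ≠ (m : ℝ))
    (φ : SchwartzMap (EuclideanSpace ℝ (Fin n)) ℂ)
    (hφ : tsupport ⇑φ ⊆ {x : EuclideanSpace ℝ (Fin n) | ∀ k, x k ≠ 0}) :
    ∫ x, ((Sp p x ^ (β / p) : ℝ) : ℂ) * ftNU ⇑φ x
          = ∫ x, ((p / Real.Gamma (-β / p)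
              * ∫ t in Ioi (0 : ℝ),
                  t ^ ((n : ℝ) + β - 1) * ∏ k, gammaP p (t * x k) : ℝ) : ℂ) * φ x := by
  have hΓ : Real.Gamma (-(β / p)) ≠ 0 := by
    refine Real.Gamma_ne_zero fun m h => hβ3 m ?_
    linarith
  have hs0 : β / p ≠ 0 := by simpa using hβ3 0
  have hsn : β / p < n := by rw [div_lt_iff₀ hp]; linarith [mul_comm p (n : ℝ)]
  obtain ⟨m, hm, h1, h2, hInteg⟩ : ∃ m : ℕ, m ≤ n ∧ β / p < m ∧ (m = 0 ∨ (m : ℝ) - 1 < β / p) ∧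
      Integrable (fun x => Sp p x ^ (β / p) * ‖ftNU ⇑φ x‖) := by
    rcases lt_or_gt_of_ne hs0 with h | h
    · have hβ : β < 0 := by
        by_contra hc
        exact absurd (div_nonneg (not_lt.1 hc) hp.le) (not_le.2 h)
      exact ⟨0, Nat.zero_le _, by simpa using h, Or.inl rfl, Sp_int_neg p hp hn β hβ hβ1 φ⟩
    · refine ⟨⌊β / p⌋₊ + 1, ?_, ?_, Or.inr ?_, Sp_int_pos p hp _ h.le φ⟩
      · exact (Nat.floor_lt h.le).2 hsn
      · push_cast; exact Nat.lt_floor_add_one _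
      · push_cast
        have := Nat.floor_le h.le
        have := hβ3 ⌊β / p⌋₊
        rw [add_sub_cancel_right]
        exact lt_of_le_of_ne (Nat.floor_le h.le) (Ne.symm this)
  have A := main_fubini p hp hn (β / p) m h1 h2 φ hInteg
  have B : ∫ u in Ioi (0 : ℝ), ((u ^ (-1 - β / p) : ℝ) : ℂ) * ∫ x, (Gm m (u * Sp p x) : ℂ) * ftNU ⇑φ x
      = (-1) ^ m * ∫ u in Ioi (0 : ℝ), ((u ^ (-1 - β / p) : ℝ) : ℂ) *
        ∫ x, (Real.exp (-(u * Sp p x)) : ℂ) * ftNU ⇑φ x := by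
    rw [← integral_const_mul]
    refine setIntegral_congr_fun measurableSet_Ioi (fun u hu => ?_)
    beta_reduce
    rw [Gm_psi_eq p hp φ hφ m hm u hu]; ring
  rw [B, subst_F p hp β φ, kernel_fubini p hp β hβ1 hβ2 φ hφ] at A
  have hR : ∫ x, ((p / Real.Gamma (-β / p)
              * ∫ t in Ioi (0 : ℝ),
                  t ^ ((n : ℝ) + β - 1) * ∏ k, gammaP p (t * x k) : ℝ) : ℂ) * φ x
      = ((p / Real.Gamma (-(β / p)) : ℝ) : ℂ) * ∫ ξ, ((∫ t in Ioi (0 : ℝ), t ^ ((n : ℝ) + β - 1) * ∏ k, gammaP p (t * ξ k) : ℝ) : ℂ) * φ ξ := by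
    rw [← integral_const_mul]
    congr 1; ext x
    rw [neg_div, Complex.ofReal_mul, mul_assoc]
  rw [hR]
  have hm1 : ((-1 : ℂ)) ^ m ≠ 0 := pow_ne_zero _ (by simp)
  have hΓ' : (Real.Gamma (-(β / p)) : ℂ) ≠ 0 := by exact_mod_cast hΓ
  rw [Complex.ofReal_mul, mul_assoc] at A
  push_cast at A ⊢
  have A' := mul_left_cancel₀ hm1 A
  rw [div_mul_eq_mul_div, eq_div_iff hΓ', ← A']
  ring


end Helpers

/-- Lemma 6: for `p > 0`, `-n < β < pn` with `β/p` not a non-negative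
integer, and `ξ` with all coordinates nonzero, the distributional Fourier transform of
`x ↦ (|x₁|^p + ⋯ + |x_n|^p)^{β/p}` coincides near `ξ` (i.e. on the open set of points with
all coordinates nonzero) with
`(p/Γ(-β/p)) ∫₀^∞ t^{n+β-1} ∏ γ_p(t ξ_k) dt`, and this integral converges. -/
theorem statement15 (p : ℝ) (hp : 0 < p) (n : ℕ) (hn : 1 ≤ n) (β : ℝ)
    (hβ1 : -(n : ℝ) < β) (hβ2 : β < p * n) (hβ3 : ∀ m : ℕ, β / p ≠ (m : ℝ))
    (ξ : EuclideanSpace ℝ (Fin n)) (hξ : ∀ k, ξ k ≠ 0) :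
    IntegrableOn
      (fun t : ℝ => t ^ ((n : ℝ) + β - 1) * ∏ k, gammaP p (t * ξ k)) (Set.Ioi 0)
    ∧ (∀ φ : SchwartzMap (EuclideanSpace ℝ (Fin n)) ℂ,
        tsupport ⇑φ ⊆ {x : EuclideanSpace ℝ (Fin n) | ∀ k, x k ≠ 0} →
        ∫ x, (((∑ k, |x k| ^ p) ^ (β / p) : ℝ) : ℂ) * ftNU ⇑φ x
          = ∫ x, ((p / Real.Gamma (-β / p)
              * ∫ t in Set.Ioi (0 : ℝ),
                  t ^ ((n : ℝ) + β - 1) * ∏ k, gammaP p (t * x k) : ℝ) : ℂ) * φ x) := by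
  exact ⟨kernel_int p hp β hβ1 hβ2 ξ hξ, fun φ hφ => main_eq p hp hn β hβ1 hβ2 hβ3 φ hφ⟩

end
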